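/- arXiv:1507.05485 — 3 statements merged into one kernel-verified Lean document; each statement's English description precedes it below -/
import Mathlib

section
/- Let N ≥ 1 and Q ≥ 1 be integers, let C = [−1,1)^{2N−1}, C₊ = [0,1)^{2N−1}, and F(x) = (1+‖x‖²)^{−N} for x ∈ ℝ^{2N−1}. For any continuous nonnegative function Θ : [−1,1]^{2N−1} × [0,1]^{2N−1} → ℝ, ∫_C Θ(A_Q(x), B_Q(x)) F(x) dx ≤ exp(2 N^{3/2}/Q) ∫_{C₊} ∫_C Θ(A_Q(x), y) F(x) dx dy. -/
/-!
On a grid cell, where `A_Q` takes the constant value `p`, the noise `B_Q` is uniformly distributed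
on `C₊`, so `∫_C Φ(A_Q x, B_Q x) dx = Q^{-k} ∑_p ∫_{C₊} Φ(p, y) dy`.  As `x = A_Q x + B_Q x / Q`,
this formula applies to both sides.  With `F_p(y) = F(p + y / Q)`, the left side becomes
`Q^{-k} ∑_p ∫_{C₊} Θ(p, y) F_p(y) dy`, and the double integral on the right becomes
`Q^{-k} ∑_p (∫_{C₊} Θ(p, y) dy) (∫_{C₊} F_p(z) dz)`.  Finally `s ↦ log (1 + s²)` is `1`-Lipschitz,
so `log F` is `N`-Lipschitz, and a cell has diameter `√k / Q`, where `k = 2N - 1`: hence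
`F_p(y) ≤ exp(N √k / Q) F_p(z)`, and averaging over `z` compares the two sums term by term.
-/

open MeasureTheory

noncomputable section

/-- Truncation of a real number at precision `Q`. -/
def truncQ (Q : ℕ) (a : ℝ) : ℝ := (⌊(Q : ℝ) * a⌋ : ℤ) / (Q : ℝ)

/-- Componentwise truncation `A_Q`. -/
def AQ (Q : ℕ) {k : ℕ} (x : Fin k → ℝ) : Fin k → ℝ := fun j => truncQ Q (x j)

/-- Remaining noise `B_Q(x) = (x − A_Q(x))·Q ∈ [0,1)^k`. -/
def BQ (Q : ℕ) {k : ℕ} (x : Fin k → ℝ) : Fin k → ℝ := fun j => (x j - truncQ Q (x j)) * Q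

/-- The density `F(x) = (1 + ‖x‖²)^(−N)` (Euclidean norm). -/
def Fdens (N : ℕ) {k : ℕ} (x : Fin k → ℝ) : ℝ := ((1 + ∑ j, x j ^ 2) ^ N)⁻¹

/-- The half-open unit cube `C₊ = [0,1)^k`, in which the noise `B_Q` takes its values. -/
def unitCube (k : ℕ) : Set (Fin k → ℝ) := Set.univ.pi fun _ => Set.Ico (0 : ℝ) 1

/-- The half-open cube `C = [-1,1)^k`. -/
def centeredCube (k : ℕ) : Set (Fin k → ℝ) := Set.univ.pi fun _ => Set.Ico (-1 : ℝ) 1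

/-- The point `m / Q` of the grid `Q⁻¹ ℤ^k`, in which `A_Q` takes its values. -/
def gridPoint (Q : ℕ) {k : ℕ} (m : Fin k → ℤ) : Fin k → ℝ := fun j => (m j : ℝ) / Q

/-- The cell of all points with truncation `m / Q`. -/
def gridCell (Q : ℕ) {k : ℕ} (m : Fin k → ℤ) : Set (Fin k → ℝ) := AQ Q ⁻¹' {gridPoint Q m}

/-- The indices `m` of the grid points `m / Q` in `C = [-1,1)^k`. -/
def gridIndices (Q k : ℕ) : Finset (Fin k → ℤ) :=
  Fintype.piFinset fun _ => Finset.Ico (-(Q : ℤ)) Q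

lemma measurableSet_unitCube (k : ℕ) : MeasurableSet (unitCube k) :=
  MeasurableSet.univ_pi fun _ => measurableSet_Ico

lemma measurableSet_centeredCube (k : ℕ) : MeasurableSet (centeredCube k) :=
  MeasurableSet.univ_pi fun _ => measurableSet_Ico

lemma unitCube_subset_Icc (k : ℕ) : unitCube k ⊆ Set.univ.pi fun _ => Set.Icc (0 : ℝ) 1 :=
  Set.pi_mono fun _ _ => Set.Ico_subset_Icc_self

lemma centeredCube_subset_Icc (k : ℕ) :
    centeredCube k ⊆ Set.univ.pi fun _ => Set.Icc (-1 : ℝ) 1 :=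
  Set.pi_mono fun _ _ => Set.Ico_subset_Icc_self

lemma volume_unitCube (k : ℕ) : volume (unitCube k) = 1 := by
  simp [unitCube, volume_pi_pi]

lemma integrableOn_unitCube_of_continuousOn {X E : Type*} [TopologicalSpace X]
    [NormedAddCommGroup E] {k : ℕ} {s : Set X} {Θ : X → (Fin k → ℝ) → E}
    (hΘ : ContinuousOn (fun p : X × (Fin k → ℝ) => Θ p.1 p.2)
      (s ×ˢ Set.univ.pi fun _ => Set.Icc (0 : ℝ) 1)) {x : X} (hx : x ∈ s) :
    IntegrableOn (Θ x) (unitCube k) := by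
  have hΘx : ContinuousOn (Θ x) (Set.univ.pi fun _ => Set.Icc (0 : ℝ) 1) :=
    hΘ.comp (Continuous.prodMk_right x).continuousOn fun _ hy => ⟨hx, hy⟩
  exact (hΘx.integrableOn_compact (isCompact_univ_pi fun _ => isCompact_Icc)).mono_set
    (unitCube_subset_Icc k)

section Grid

variable {Q k : ℕ}

lemma measurable_AQ : Measurable (AQ Q : (Fin k → ℝ) → Fin k → ℝ) := by
  unfold AQ truncQ
  fun_prop

lemma BQ_eq_smul_sub (x : Fin k → ℝ) : BQ Q x = (Q : ℝ) • (x - AQ Q x) := by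
  ext j
  simp [BQ, AQ, mul_comm]

lemma measurable_BQ : Measurable (BQ Q : (Fin k → ℝ) → Fin k → ℝ) := by
  unfold BQ truncQ
  fun_prop

lemma AQ_add_smul_BQ (hQ : 0 < Q) (x : Fin k → ℝ) : AQ Q x + (Q : ℝ)⁻¹ • BQ Q x = x := by
  rw [BQ_eq_smul_sub, inv_smul_smul₀ (by positivity), add_sub_cancel]

lemma mem_gridCell_iff_floor (hQ : 0 < Q) {m : Fin k → ℤ} {x : Fin k → ℝ} :
    x ∈ gridCell Q m ↔ ∀ j, ⌊(Q : ℝ) * x j⌋ = m j := by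
  have hQ₀ : (Q : ℝ) ≠ 0 := by positivity
  simp [gridCell, funext_iff, AQ, truncQ, gridPoint, div_left_inj' hQ₀]

lemma gridCell_eq_preimage (hQ : 0 < Q) (m : Fin k → ℤ) :
    gridCell Q m = (fun x => (Q : ℝ) • (x - gridPoint Q m)) ⁻¹' unitCube k := by
  have hQ₀ : (Q : ℝ) ≠ 0 := by positivity
  ext x
  rw [mem_gridCell_iff_floor hQ]
  simp [unitCube, gridPoint, Int.floor_eq_iff, mul_sub, mul_div_cancel₀ _ hQ₀, sub_lt_iff_lt_add']

lemma gridPoint_add_smul_mem_gridCell (hQ : 0 < Q) (m : Fin k → ℤ) {y : Fin k → ℝ}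
    (hy : y ∈ unitCube k) : gridPoint Q m + (Q : ℝ)⁻¹ • y ∈ gridCell Q m := by
  rw [gridCell_eq_preimage hQ, Set.mem_preimage, add_sub_cancel_left,
    smul_inv_smul₀ (by positivity)]
  exact hy

lemma measurableSet_gridCell (m : Fin k → ℤ) : MeasurableSet (gridCell Q m) :=
  measurable_AQ (measurableSet_singleton _)

lemma gridPoint_injective (hQ : 0 < Q) : Function.Injective (gridPoint Q (k := k)) := by
  have hQ₀ : (Q : ℝ) ≠ 0 := by positivity
  exact fun m m' h => funext fun j => by simpa [gridPoint, div_left_inj' hQ₀] using congrFun h j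

lemma pairwise_disjoint_gridCell (hQ : 0 < Q) :
    Pairwise (Function.onFun Disjoint (gridCell Q (k := k))) := fun _ _ hne =>
  Disjoint.preimage _ (Set.disjoint_singleton.2 ((gridPoint_injective hQ).ne hne))

lemma mem_Ico_neg_one_one_iff_floor (hQ : 0 < Q) {t : ℝ} :
    t ∈ Set.Ico (-1 : ℝ) 1 ↔ ⌊(Q : ℝ) * t⌋ ∈ Finset.Ico (-(Q : ℤ)) Q := by
  have hQ₀ : (0 : ℝ) < Q := by positivity
  rw [Finset.mem_Ico, Int.le_floor, Int.floor_lt, Set.mem_Ico]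
  push_cast
  rw [← mul_neg_one (Q : ℝ), mul_le_mul_iff_right₀ hQ₀, mul_lt_iff_lt_one_right hQ₀]

lemma centeredCube_eq_biUnion_gridCell (hQ : 0 < Q) :
    centeredCube k = ⋃ m ∈ gridIndices Q k, gridCell Q m := by
  ext x
  simp only [centeredCube, gridIndices, Set.mem_univ_pi, Set.mem_iUnion, exists_prop,
    Fintype.mem_piFinset, mem_gridCell_iff_floor hQ, mem_Ico_neg_one_one_iff_floor hQ]
  exact ⟨fun h => ⟨_, h, fun _ => rfl⟩, fun ⟨_, hm, h⟩ j => h j ▸ hm j⟩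

lemma gridPoint_mem_centeredCube (hQ : 0 < Q) {m : Fin k → ℤ} (hm : m ∈ gridIndices Q k) :
    gridPoint Q m ∈ centeredCube k := by
  have hQ₀ : (Q : ℝ) ≠ 0 := by positivity
  rw [gridIndices, Fintype.mem_piFinset] at hm
  simpa [centeredCube, mem_Ico_neg_one_one_iff_floor hQ, gridPoint, mul_div_cancel₀ _ hQ₀] using hm

lemma AQ_mem_centeredCube (hQ : 0 < Q) {x : Fin k → ℝ} (hx : x ∈ centeredCube k) :
    AQ Q x ∈ centeredCube k := by
  rw [centeredCube_eq_biUnion_gridCell hQ, Set.mem_iUnion₂] at hx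
  obtain ⟨m, hm, hxm⟩ := hx
  rw [show AQ Q x = gridPoint Q m from hxm]
  exact gridPoint_mem_centeredCube hQ hm

lemma abs_sub_le_of_AQ_eq (hQ : 0 < Q) {x z : Fin k → ℝ} (h : AQ Q x = AQ Q z) (j : Fin k) :
    |x j - z j| ≤ 1 / Q := by
  have hQ₀ : (0 : ℝ) < Q := by positivity
  have hfloor : ⌊(Q : ℝ) * x j⌋ = ⌊(Q : ℝ) * z j⌋ := by
    simpa [AQ, truncQ, div_left_inj' hQ₀.ne'] using congrFun h j
  have habs := (Int.abs_sub_lt_one_of_floor_eq_floor hfloor).le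
  rwa [← mul_sub, abs_mul, abs_of_pos hQ₀, ← le_div_iff₀' hQ₀] at habs

end Grid

section Uniform

variable {E : Type*} [NormedAddCommGroup E] {Q k : ℕ}

lemma map_smul_sub_addHaar {V : Type*} [NormedAddCommGroup V] [NormedSpace ℝ V]
    [MeasurableSpace V] [BorelSpace V] [FiniteDimensional ℝ V] (μ : Measure V)
    [μ.IsAddHaarMeasure] {r : ℝ} (hr : r ≠ 0) (c : V) :
    μ.map (fun x => r • (x - c)) = ENNReal.ofReal |(r ^ Module.finrank ℝ V)⁻¹| • μ := by
  rw [← Measure.map_addHaar_smul μ hr]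
  nth_rw 2 [← map_sub_right_eq_self μ c]
  rw [Measure.map_map (by fun_prop) (by fun_prop)]
  rfl

lemma map_BQ_restrict_gridCell (hQ : 0 < Q) (m : Fin k → ℤ) :
    (volume.restrict (gridCell Q m)).map (BQ Q)
      = ENNReal.ofReal ((Q : ℝ) ^ k)⁻¹ • volume.restrict (unitCube k) := by
  have hQ₀ : (Q : ℝ) ≠ 0 := by positivity
  have hBQ : BQ Q =ᵐ[volume.restrict (gridCell Q m)] fun x => (Q : ℝ) • (x - gridPoint Q m) :=
    ae_restrict_of_forall_mem (measurableSet_gridCell m) fun x hx => by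
      rw [BQ_eq_smul_sub, show AQ Q x = gridPoint Q m from hx]
  rw [Measure.map_congr hBQ, gridCell_eq_preimage hQ,
    ← Measure.restrict_map (by fun_prop) (measurableSet_unitCube k), map_smul_sub_addHaar _ hQ₀,
    Measure.restrict_smul, Module.finrank_fin_fun, abs_of_nonneg (by positivity)]

lemma integrableOn_gridCell_comp_BQ (hQ : 0 < Q) (m : Fin k → ℤ) {f : (Fin k → ℝ) → E}
    (hf : IntegrableOn f (unitCube k)) :
    IntegrableOn (fun x => f (BQ Q x)) (gridCell Q m) := by
  refine Integrable.comp_measurable ?_ measurable_BQ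
  rw [map_BQ_restrict_gridCell hQ]
  exact hf.smul_measure ENNReal.ofReal_ne_top

variable [NormedSpace ℝ E]

lemma setIntegral_gridCell_comp_BQ (hQ : 0 < Q) (m : Fin k → ℤ) {f : (Fin k → ℝ) → E}
    (hf : AEStronglyMeasurable f (volume.restrict (unitCube k))) :
    ∫ x in gridCell Q m, f (BQ Q x) = ((Q : ℝ) ^ k)⁻¹ • ∫ y in unitCube k, f y := by
  have hmap := map_BQ_restrict_gridCell hQ m
  rw [← integral_map measurable_BQ.aemeasurable (hmap ▸ hf.smul_measure _), hmap,
    integral_smul_measure, ENNReal.toReal_ofReal (by positivity)]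

theorem setIntegral_centeredCube_comp_AQ_BQ (hQ : 0 < Q) {Φ : (Fin k → ℝ) → (Fin k → ℝ) → E}
    (hΦ : ∀ m ∈ gridIndices Q k, IntegrableOn (Φ (gridPoint Q m)) (unitCube k)) :
    ∫ x in centeredCube k, Φ (AQ Q x) (BQ Q x)
      = ((Q : ℝ) ^ k)⁻¹ • ∑ m ∈ gridIndices Q k, ∫ y in unitCube k, Φ (gridPoint Q m) y := by
  have hcell (m : Fin k → ℤ) : Set.EqOn (fun x => Φ (gridPoint Q m) (BQ Q x))
      (fun x => Φ (AQ Q x) (BQ Q x)) (gridCell Q m) := fun x hx =>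
    congrArg (Φ · (BQ Q x)) hx.symm
  rw [centeredCube_eq_biUnion_gridCell hQ, integral_biUnion_finset _
    (fun m _ => measurableSet_gridCell m) ((pairwise_disjoint_gridCell hQ).set_pairwise _)
    fun m hm => (integrableOn_gridCell_comp_BQ hQ m (hΦ m hm)).congr_fun (hcell m)
      (measurableSet_gridCell m), Finset.smul_sum]
  refine Finset.sum_congr rfl fun m hm => ?_
  rw [← setIntegral_congr_fun (measurableSet_gridCell m) (hcell m),
    setIntegral_gridCell_comp_BQ hQ m (hΦ m hm).aestronglyMeasurable]

end Uniform

section Weight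

variable {Q k : ℕ} {K : ℝ} {F : (Fin k → ℝ) → ℝ}

lemma integrableOn_unitCube_mul_weight (hQ : 0 < Q) (hF : Measurable F) (hF₀ : ∀ x, 0 ≤ F x)
    (hFK : ∀ x z, AQ Q x = AQ Q z → F x ≤ K * F z) (m : Fin k → ℤ) {f : (Fin k → ℝ) → ℝ}
    (hf : IntegrableOn f (unitCube k)) :
    IntegrableOn (fun y => f y * F (gridPoint Q m + (Q : ℝ)⁻¹ • y)) (unitCube k) := by
  have hbound : ∀ y ∈ unitCube k, ‖F (gridPoint Q m + (Q : ℝ)⁻¹ • y)‖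
      ≤ K * F (gridPoint Q m + (Q : ℝ)⁻¹ • 0) := fun y hy => by
    have h0 : (0 : Fin k → ℝ) ∈ unitCube k := by simp [unitCube]
    rw [Real.norm_of_nonneg (hF₀ _)]
    exact hFK _ _ ((gridPoint_add_smul_mem_gridCell hQ m hy).trans
      (gridPoint_add_smul_mem_gridCell hQ m h0).symm)
  exact hf.mul_bdd (hF.comp (by fun_prop)).aestronglyMeasurable
    (ae_restrict_of_forall_mem (measurableSet_unitCube k) hbound)

lemma integrableOn_unitCube_weight (hQ : 0 < Q) (hF : Measurable F) (hF₀ : ∀ x, 0 ≤ F x)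
    (hFK : ∀ x z, AQ Q x = AQ Q z → F x ≤ K * F z) (m : Fin k → ℤ) :
    IntegrableOn (fun y => F (gridPoint Q m + (Q : ℝ)⁻¹ • y)) (unitCube k) := by
  simpa using integrableOn_unitCube_mul_weight hQ hF hF₀ hFK m (f := fun _ => 1)
    (integrableOn_const (by simp [volume_unitCube]))

lemma weight_le_mul_setIntegral (hQ : 0 < Q) (hF : Measurable F) (hF₀ : ∀ x, 0 ≤ F x)
    (hFK : ∀ x z, AQ Q x = AQ Q z → F x ≤ K * F z) (m : Fin k → ℤ) {y : Fin k → ℝ}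
    (hy : y ∈ unitCube k) :
    F (gridPoint Q m + (Q : ℝ)⁻¹ • y)
      ≤ K * ∫ z in unitCube k, F (gridPoint Q m + (Q : ℝ)⁻¹ • z) := by
  calc F (gridPoint Q m + (Q : ℝ)⁻¹ • y)
      = ∫ _ in unitCube k, F (gridPoint Q m + (Q : ℝ)⁻¹ • y) := by
        simp [Measure.real, volume_unitCube]
    _ ≤ ∫ z in unitCube k, K * F (gridPoint Q m + (Q : ℝ)⁻¹ • z) := by
        refine setIntegral_mono_on (integrableOn_const (by simp [volume_unitCube]))
          ((integrableOn_unitCube_weight hQ hF hF₀ hFK m).const_mul K)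
          (measurableSet_unitCube k) fun z hz => hFK _ _ ?_
        exact (gridPoint_add_smul_mem_gridCell hQ m hy).trans
          (gridPoint_add_smul_mem_gridCell hQ m hz).symm
    _ = _ := integral_const_mul _ _

theorem setIntegral_comp_AQ_BQ_mul_le (hQ : 0 < Q) (hF : Measurable F) (hF₀ : ∀ x, 0 ≤ F x)
    (hFK : ∀ x z, AQ Q x = AQ Q z → F x ≤ K * F z) {Θ : (Fin k → ℝ) → (Fin k → ℝ) → ℝ}
    (hΘ : ∀ x ∈ centeredCube k, IntegrableOn (Θ x) (unitCube k))
    (hΘ₀ : ∀ x ∈ centeredCube k, ∀ y ∈ unitCube k, 0 ≤ Θ x y) :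
    ∫ x in centeredCube k, Θ (AQ Q x) (BQ Q x) * F x
      ≤ K * ∫ y in unitCube k, ∫ x in centeredCube k, Θ (AQ Q x) y * F x := by
  set I : (Fin k → ℤ) → ℝ := fun m => ∫ z in unitCube k, F (gridPoint Q m + (Q : ℝ)⁻¹ • z)
  have hgrid (m) (hm : m ∈ gridIndices Q k) := gridPoint_mem_centeredCube hQ hm
  have hΘF (m) (hm : m ∈ gridIndices Q k) :=
    integrableOn_unitCube_mul_weight hQ hF hF₀ hFK m (hΘ _ (hgrid m hm))
  have hleft : ∫ x in centeredCube k, Θ (AQ Q x) (BQ Q x) * F x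
      = ((Q : ℝ) ^ k)⁻¹ * ∑ m ∈ gridIndices Q k, ∫ y in unitCube k,
          Θ (gridPoint Q m) y * F (gridPoint Q m + (Q : ℝ)⁻¹ • y) := by
    simpa only [AQ_add_smul_BQ hQ, smul_eq_mul] using
      setIntegral_centeredCube_comp_AQ_BQ hQ (Φ := fun a b => Θ a b * F (a + (Q : ℝ)⁻¹ • b)) hΘF
  have hinner (y : Fin k → ℝ) : ∫ x in centeredCube k, Θ (AQ Q x) y * F x
      = ((Q : ℝ) ^ k)⁻¹ * ∑ m ∈ gridIndices Q k, Θ (gridPoint Q m) y * I m := by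
    simpa only [AQ_add_smul_BQ hQ, smul_eq_mul, integral_const_mul] using
      setIntegral_centeredCube_comp_AQ_BQ hQ (Φ := fun a b => Θ a y * F (a + (Q : ℝ)⁻¹ • b))
        fun m _ => (integrableOn_unitCube_weight hQ hF hF₀ hFK m).const_mul _
  have hright : ∫ y in unitCube k, ∫ x in centeredCube k, Θ (AQ Q x) y * F x
      = ((Q : ℝ) ^ k)⁻¹ * ∑ m ∈ gridIndices Q k, ∫ y in unitCube k, Θ (gridPoint Q m) y * I m := by
    simp_rw [hinner]
    rw [integral_const_mul, integral_finsetSum _ fun m hm => (hΘ _ (hgrid m hm)).mul_const _]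
  rw [hleft, hright, mul_left_comm, Finset.mul_sum _ _ K]
  gcongr with m hm
  rw [← integral_const_mul]
  refine setIntegral_mono_on (hΘF m hm) (((hΘ _ (hgrid m hm)).mul_const _).const_mul _)
    (measurableSet_unitCube k) fun y hy => ?_
  rw [mul_left_comm]
  exact mul_le_mul_of_nonneg_left (weight_le_mul_setIntegral hQ hF hF₀ hFK m hy)
    (hΘ₀ _ (hgrid m hm) y hy)

lemma setIntegral_setIntegral_comp_AQ_mul_nonneg (hQ : 0 < Q) (hF₀ : ∀ x, 0 ≤ F x)
    {Θ : (Fin k → ℝ) → (Fin k → ℝ) → ℝ}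
    (hΘ₀ : ∀ x ∈ centeredCube k, ∀ y ∈ unitCube k, 0 ≤ Θ x y) :
    0 ≤ ∫ y in unitCube k, ∫ x in centeredCube k, Θ (AQ Q x) y * F x :=
  setIntegral_nonneg (measurableSet_unitCube k) fun y hy =>
    setIntegral_nonneg (measurableSet_centeredCube k) fun x hx =>
      mul_nonneg (hΘ₀ _ (AQ_mem_centeredCube hQ hx) y hy) (hF₀ x)

end Weight

section Density

lemma lipschitzWith_log_one_add_sq : LipschitzWith 1 fun s : ℝ => Real.log (1 + s ^ 2) := by
  have hderiv (s : ℝ) : HasDerivAt (fun s => Real.log (1 + s ^ 2)) (2 * s / (1 + s ^ 2)) s := by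
    simpa using ((hasDerivAt_pow 2 s).const_add 1).log (by positivity)
  refine lipschitzWith_of_nnnorm_deriv_le (fun s => (hderiv s).differentiableAt) fun s => ?_
  rw [← NNReal.coe_le_coe, coe_nnnorm, (hderiv s).deriv, NNReal.coe_one, Real.norm_eq_abs, abs_div,
    abs_of_pos (by positivity : 0 < 1 + s ^ 2), div_le_one (by positivity), abs_le]
  constructor <;> nlinarith [sq_nonneg (1 - s), sq_nonneg (1 + s)]

lemma one_add_sq_norm_le_exp_mul {V : Type*} [SeminormedAddCommGroup V] (x z : V) :
    1 + ‖z‖ ^ 2 ≤ Real.exp ‖x - z‖ * (1 + ‖x‖ ^ 2) := by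
  have hlog : Real.log (1 + ‖z‖ ^ 2) - Real.log (1 + ‖x‖ ^ 2) ≤ ‖x - z‖ := by
    calc Real.log (1 + ‖z‖ ^ 2) - Real.log (1 + ‖x‖ ^ 2)
        ≤ |‖z‖ - ‖x‖| := by
          simpa [Real.dist_eq] using
            (le_abs_self _).trans (lipschitzWith_log_one_add_sq.dist_le_mul ‖z‖ ‖x‖)
      _ ≤ ‖x - z‖ := norm_sub_rev x z ▸ abs_norm_sub_norm_le z x
  rw [← Real.log_div (by positivity) (by positivity), Real.log_le_iff_le_exp (by positivity),
    div_le_iff₀ (by positivity)] at hlog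
  exact hlog

variable {k : ℕ}

lemma Fdens_eq_norm (N : ℕ) (x : Fin k → ℝ) :
    Fdens N x = ((1 + ‖WithLp.toLp 2 x‖ ^ 2) ^ N)⁻¹ := by
  rw [Fdens, EuclideanSpace.real_norm_sq_eq]

lemma Fdens_nonneg (N : ℕ) (x : Fin k → ℝ) : 0 ≤ Fdens N x := by
  rw [Fdens_eq_norm]
  positivity

lemma measurable_Fdens (N : ℕ) : Measurable (Fdens N : (Fin k → ℝ) → ℝ) := by
  unfold Fdens
  fun_prop

lemma Fdens_le_exp_mul (N : ℕ) (x z : Fin k → ℝ) :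
    Fdens N x ≤ Real.exp (N * ‖WithLp.toLp 2 (x - z)‖) * Fdens N z := by
  rw [Fdens_eq_norm, Fdens_eq_norm, Real.exp_nat_mul, ← div_eq_mul_inv,
    inv_le_iff_one_le_mul₀ (by positivity), div_mul_eq_mul_div, one_le_div (by positivity),
    ← mul_pow, WithLp.toLp_sub]
  gcongr
  exact one_add_sq_norm_le_exp_mul _ _

lemma norm_toLp_le_sqrt_card_mul {ι : Type*} [Fintype ι] {x : ι → ℝ} {r : ℝ} (hr : 0 ≤ r)
    (hx : ∀ j, |x j| ≤ r) : ‖WithLp.toLp 2 x‖ ≤ √(Fintype.card ι) * r := by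
  have hsum : ∑ j, x j ^ 2 ≤ Fintype.card ι * r ^ 2 := by
    simpa using Finset.sum_le_card_nsmul Finset.univ (fun j => x j ^ 2) (r ^ 2) fun j _ =>
      sq_le_sq.2 ((hx j).trans (le_abs_self r))
  refine le_of_sq_le_sq ?_ (by positivity)
  rwa [EuclideanSpace.real_norm_sq_eq, mul_pow, Real.sq_sqrt (by positivity)]

lemma Fdens_le_exp_mul_of_AQ_eq (N : ℕ) {Q : ℕ} (hQ : 0 < Q) (x z : Fin k → ℝ)
    (h : AQ Q x = AQ Q z) : Fdens N x ≤ Real.exp (N * √k / Q) * Fdens N z := by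
  refine (Fdens_le_exp_mul N x z).trans ?_
  have hnorm : ‖WithLp.toLp 2 (x - z)‖ ≤ √k * (1 / Q) := by
    simpa only [Fintype.card_fin] using
      norm_toLp_le_sqrt_card_mul (x := x - z) (by positivity) (abs_sub_le_of_AQ_eq hQ h)
  rw [mul_div_assoc, div_eq_mul_one_div √_]
  gcongr
  exact Fdens_nonneg N z

lemma natCast_mul_sqrt_le_two_mul_rpow {N k : ℕ} (hk : k ≤ 4 * N) :
    N * √k ≤ 2 * (N : ℝ) ^ (3 / 2 : ℝ) := by
  have hsqrt : √k ≤ 2 * √N := by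
    rw [Real.sqrt_le_left (by positivity), mul_pow, Real.sq_sqrt (by positivity)]
    have hkN : (k : ℝ) ≤ 4 * N := mod_cast hk
    linarith
  calc N * √k ≤ N * (2 * √N) := by gcongr
    _ = 2 * (N : ℝ) ^ (3 / 2 : ℝ) := by
      rw [show (3 / 2 : ℝ) = 1 + 1 / 2 by norm_num, Real.rpow_add_of_nonneg (by positivity)
        (by norm_num) (by norm_num), Real.rpow_one, Real.sqrt_eq_rpow]
      ring

end Density

theorem truncation_noise_integral_general (N : ℕ) {Q k : ℕ} (hQ : 0 < Q)
    {Θ : (Fin k → ℝ) → (Fin k → ℝ) → ℝ}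
    (hΘ : ∀ x ∈ centeredCube k, IntegrableOn (Θ x) (unitCube k))
    (hΘ₀ : ∀ x ∈ centeredCube k, ∀ y ∈ unitCube k, 0 ≤ Θ x y) :
    ∫ x in centeredCube k, Θ (AQ Q x) (BQ Q x) * Fdens N x
      ≤ Real.exp (N * √k / Q) *
        ∫ y in unitCube k, ∫ x in centeredCube k, Θ (AQ Q x) y * Fdens N x :=
  setIntegral_comp_AQ_BQ_mul_le hQ (measurable_Fdens N) (Fdens_nonneg N)
    (Fdens_le_exp_mul_of_AQ_eq N hQ) hΘ hΘ₀

/-- Derandomization estimate for the cube: for continuous nonnegative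
`Θ : [−1,1]^(2N−1) × [0,1]^(2N−1) → ℝ`,
`∫_C Θ(A_Q x, B_Q x) F(x) dx ≤ exp(2 N^(3/2)/Q) ∫_{C₊} ∫_C Θ(A_Q x, y) F(x) dx dy`. -/
theorem truncation_noise_integral (N Q : ℕ) (hN : 1 ≤ N) (hQ : 1 ≤ Q)
    (Θ : (Fin (2 * N - 1) → ℝ) → (Fin (2 * N - 1) → ℝ) → ℝ)
    (hΘcont : ContinuousOn (fun p : (Fin (2 * N - 1) → ℝ) × (Fin (2 * N - 1) → ℝ) => Θ p.1 p.2)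
      ((Set.univ.pi fun _ => Set.Icc (-1 : ℝ) 1) ×ˢ (Set.univ.pi fun _ => Set.Icc (0 : ℝ) 1)))
    (hΘnonneg : ∀ x ∈ Set.univ.pi fun _ : Fin (2 * N - 1) => Set.Icc (-1 : ℝ) 1,
      ∀ y ∈ Set.univ.pi fun _ : Fin (2 * N - 1) => Set.Icc (0 : ℝ) 1, 0 ≤ Θ x y) :
    ∫ x in Set.univ.pi fun _ : Fin (2 * N - 1) => Set.Ico (-1 : ℝ) 1,
        Θ (AQ Q x) (BQ Q x) * Fdens N x
      ≤ Real.exp (2 * (N : ℝ) ^ (3 / 2 : ℝ) / Q) *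
        ∫ y in Set.univ.pi fun _ : Fin (2 * N - 1) => Set.Ico (0 : ℝ) 1,
          ∫ x in Set.univ.pi fun _ : Fin (2 * N - 1) => Set.Ico (-1 : ℝ) 1,
            Θ (AQ Q x) y * Fdens N x := by
  have hΘ : ∀ x ∈ centeredCube (2 * N - 1), IntegrableOn (Θ x) (unitCube (2 * N - 1)) :=
    fun _ hx => integrableOn_unitCube_of_continuousOn hΘcont (centeredCube_subset_Icc _ hx)
  have hΘ₀ : ∀ x ∈ centeredCube (2 * N - 1), ∀ y ∈ unitCube (2 * N - 1), 0 ≤ Θ x y :=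
    fun x hx y hy => hΘnonneg x (centeredCube_subset_Icc _ hx) y (unitCube_subset_Icc _ hy)
  have hexp : Real.exp (N * √(2 * N - 1 : ℕ) / Q) ≤ Real.exp (2 * (N : ℝ) ^ (3 / 2 : ℝ) / Q) := by
    gcongr Real.exp (?_ / Q)
    exact natCast_mul_sqrt_le_two_mul_rpow (by lia)
  exact (truncation_noise_integral_general N hQ hΘ hΘ₀).trans <|
    mul_le_mul_of_nonneg_right hexp <|
      setIntegral_setIntegral_comp_AQ_mul_nonneg hQ (Fdens_nonneg N) hΘ₀
end
end

section
/- Let N ≥ 1 and Q ≥ 1 be integers. For every u ∈ S^{2N−1}, d_S(⌊u⌋_Q, u) ≤ 3 N^{1/2}/Q. Moreover, for any continuous nonnegative function Θ : S^{2N−1} × S^{2N−1} → ℝ, (1/vol(S^{2N−1})) ∫_{S^{2N−1}} Θ(⌊u⌋_Q, {u}_Q) du ≤ (exp(2 N^{3/2}/Q)/vol(S^{2N−1})²) ∫_{S^{2N−1}} ∫_{S^{2N−1}} Θ(⌊u⌋_Q, v) du dv. -/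
/-!
**Distance.**  The cube point `x = ν_∞(u)` and its truncation `a` agree in the face coordinate,
where both have absolute value `1`, and differ by at most `1/Q` in the others.  Hence both have
Euclidean norm at least `1`, so the angle between them is at most
`(π/2) ‖a - x‖ ≤ (π/2) √(2N) / Q`, and `(π/2) √2 ≤ 3`.

**Integral inequality.**  The uniform measure is the radial projection of the standard Gaussian
measure, and truncation and fractional part are invariant under positive scaling, so everything can
be computed for a Gaussian vector.  In the coordinates `r (±1, w)` of the cone over a face of the
cube, integrating out `r` leaves a density proportional to `(1 + |w|²)^(-N)`, which varies by a
factor of at most `exp (2 N^(3/2) / Q)` on a cell of side `1/Q`.  Under Lebesgue measure the integer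
and fractional parts of `Q w` are independent and the fractional part is uniform.  Thus the digits
of a Gaussian vector are uniform on the cube and independent of the truncation, up to that factor.

**Sibuya's map** sends the uniform measure on the cube to the uniform measure on the sphere.  By
Box–Muller, each coordinate plane of a Gaussian vector has a uniform angle and an independent
exponential half squared radius, so after normalisation the squared radii are the proportions of `N`
independent exponentials.  These have the law of the spacings of `N - 1` independent uniform points:
the partial sums of both are uniform on the simplex of increasing sequences.
-/

open MeasureTheory ProbabilityTheory
open scoped ENNReal

noncomputable section

/-- The sup norm `‖x‖_∞` of a finite real vector. -/
def normInf {m : ℕ} (x : Fin m → ℝ) : ℝ := ⨆ i, |x i|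

/-- The smallest index of a coordinate realizing `‖x‖_∞` (as a natural number). -/
def faceIdxN {m : ℕ} (x : Fin m → ℝ) : ℕ := sInf {k | ∃ h : k < m, |x ⟨k, h⟩| = normInf x}

/-- Radial projection `ν_∞(u) = u / ‖u‖_∞` onto the cube `Σ`. -/
def nuInf {m : ℕ} (u : Fin m → ℝ) : Fin m → ℝ := fun k => u k / normInf u

/-- Cumulative order statistics for Sibuya's map. -/
def sibuyaYs (N : ℕ) (x : Fin (2 * N - 1) → ℝ) (k : ℕ) : ℝ :=
  if k = 0 then 0
  else if N ≤ k then 1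
  else
    let tail : Fin (N - 1) → ℝ := fun i =>
      if h : N + i.val < 2 * N - 1 then x ⟨N + i.val, h⟩ else 0
    if h : k - 1 < N - 1 then tail (Tuple.sort tail ⟨k - 1, h⟩) else 1

/-- Sibuya's map `S : [0,1)^(2N−1) → S^(2N−1)`. -/
def sibuya (N : ℕ) (x : Fin (2 * N - 1) → ℝ) : Fin (2 * N) → ℝ := fun j =>
  let i := j.val / 2
  let ang := if h : i < 2 * N - 1 then 2 * Real.pi * x ⟨i, h⟩ else 0
  Real.sqrt (sibuyaYs N x (i + 1) - sibuyaYs N x i) *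
    (if j.val % 2 = 0 then Real.cos ang else Real.sin ang)

/-- The truncation `⌊u⌋_Q ∈ S^(2N−1)` at precision `Q`: truncate all cube coordinates of
`ν_∞(u)` except the face coordinate, then renormalize to the Euclidean sphere. -/
def truncSphere (N Q : ℕ) (u : Fin (2 * N) → ℝ) : Fin (2 * N) → ℝ :=
  let x := nuInf u
  let a : Fin (2 * N) → ℝ := fun k => if k.val = faceIdxN x then x k else truncQ Q (x k)
  (Real.sqrt (∑ i, a i ^ 2))⁻¹ • a

/-- The fractional part `{u}_Q ∈ S^(2N−1)` at precision `Q`: the remaining digits of the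
non-face coordinates of `ν_∞(u)`, fed through Sibuya's map. -/
def fracSphere (N Q : ℕ) (u : Fin (2 * N) → ℝ) : Fin (2 * N) → ℝ :=
  let x := nuInf u
  sibuya N (fun j =>
    let k := if j.val < faceIdxN x then j.val else j.val + 1
    if h : k < 2 * N then (x ⟨k, h⟩ - truncQ Q (x ⟨k, h⟩)) * Q else 0)

/-- Geodesic distance on the unit sphere: `cos d_S(x,y) = ⟨x,y⟩`. -/
def dSph {m : ℕ} (x y : Fin m → ℝ) : ℝ := Real.arccos (∑ i, x i * y i)

/-- The uniform probability measure on `S^(2N−1) ⊂ ℝ^(2N)` (pushforward of the standard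
Gaussian under radial normalization). -/
def uniformSphere (N : ℕ) : Measure (Fin (2 * N) → ℝ) :=
  Measure.map (fun x => (Real.sqrt (∑ i, x i ^ 2))⁻¹ • x)
    (Measure.pi fun _ => gaussianReal 0 1)

/-! ### Sup norm, faces of the cube, truncation -/

theorem normInf_eq_norm {m : ℕ} (x : Fin m → ℝ) : normInf x = ‖x‖ :=
  le_antisymm (Real.iSup_le (norm_le_pi_norm x) (norm_nonneg x))
    ((pi_norm_le_iff_of_nonneg (Real.iSup_nonneg fun _ => abs_nonneg _)).2
      (le_ciSup (Set.finite_range fun i => |x i|).bddAbove))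

theorem nuInf_eq_smul {m : ℕ} (x : Fin m → ℝ) : nuInf x = ‖x‖⁻¹ • x := by
  funext k
  rw [nuInf, normInf_eq_norm, Pi.smul_apply, smul_eq_mul, div_eq_inv_mul]

theorem norm_nuInf {m : ℕ} {x : Fin m → ℝ} (hx : x ≠ 0) : ‖nuInf x‖ = 1 := by
  rw [nuInf_eq_smul, norm_smul, norm_inv, norm_norm, inv_mul_cancel₀ (norm_ne_zero_iff.2 hx)]

theorem nuInf_smul {m : ℕ} {c : ℝ} (hc : 0 < c) (x : Fin m → ℝ) : nuInf (c • x) = nuInf x := by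
  rw [nuInf_eq_smul, nuInf_eq_smul, norm_smul, Real.norm_of_nonneg hc.le, mul_inv, smul_smul,
    mul_right_comm, inv_mul_cancel₀ hc.ne', one_mul]

theorem exists_abs_eq_norm {n : ℕ} (x : Fin (n + 1) → ℝ) : ∃ i, |x i| = ‖x‖ := by
  rw [← normInf_eq_norm]
  exact exists_eq_ciSup_of_finite

theorem nonempty_abs_eq_normInf {n : ℕ} (x : Fin (n + 1) → ℝ) :
    {k | ∃ h : k < n + 1, |x ⟨k, h⟩| = normInf x}.Nonempty :=
  let ⟨i, hi⟩ := exists_abs_eq_norm x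
  ⟨i, i.2, hi.trans (normInf_eq_norm x).symm⟩

theorem exists_faceIdxN_eq {n : ℕ} (x : Fin (n + 1) → ℝ) : ∃ i : Fin (n + 1), faceIdxN x = i :=
  ⟨⟨_, (Nat.sInf_mem (nonempty_abs_eq_normInf x)).1⟩, rfl⟩

theorem faceIdxN_eq_iff {n : ℕ} (x : Fin (n + 1) → ℝ) (i : Fin (n + 1)) :
    faceIdxN x = i ↔ |x i| = ‖x‖ ∧ ∀ k < i, |x k| ≠ ‖x‖ := by
  have hne := nonempty_abs_eq_normInf x
  rw [← normInf_eq_norm]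
  constructor
  · intro h
    have hmem : faceIdxN x ∈ _ := Nat.sInf_mem hne
    rw [h] at hmem
    exact ⟨hmem.2, fun k hk hk' =>
      Nat.notMem_of_lt_sInf ((Fin.lt_def.1 hk).trans_eq h.symm) ⟨k.2, hk'⟩⟩
  · rintro ⟨hi, hlt⟩
    refine le_antisymm (Nat.sInf_le ⟨i.2, hi⟩) (le_csInf hne ?_)
    rintro k ⟨hk, hk'⟩
    exact not_lt.1 fun hki => hlt ⟨k, hk⟩ hki hk'

/-- Radial projection onto the Euclidean unit sphere, `ν_2(x) = x / ‖x‖`. -/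
def toSphere {m : ℕ} (x : Fin m → ℝ) : Fin m → ℝ := (Real.sqrt (∑ i, x i ^ 2))⁻¹ • x

/-- Truncation `A'_Q` on the surface of the cube: the face coordinate is kept, the others are
truncated at precision `Q`. -/
def truncCube {m : ℕ} (Q : ℕ) (x : Fin m → ℝ) : Fin m → ℝ :=
  fun k => if k.val = faceIdxN x then x k else truncQ Q (x k)

theorem truncSphere_eq (N Q : ℕ) (u : Fin (2 * N) → ℝ) :
    truncSphere N Q u = toSphere (truncCube Q (nuInf u)) := rfl

theorem toSphere_eq_self {m : ℕ} {x : Fin m → ℝ} (hx : ∑ i, x i ^ 2 = 1) : toSphere x = x := by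
  simp [toSphere, hx]

theorem toSphere_smul {m : ℕ} {c : ℝ} (hc : 0 < c) (x : Fin m → ℝ) :
    toSphere (c • x) = toSphere x := by
  simp only [toSphere, Pi.smul_apply, smul_eq_mul, mul_pow, ← Finset.mul_sum, smul_smul]
  rw [Real.sqrt_mul (sq_nonneg c), Real.sqrt_sq hc.le, mul_inv, mul_right_comm,
    inv_mul_cancel₀ hc.ne', one_mul]

theorem toSphere_nuInf {m : ℕ} {x : Fin m → ℝ} (hx : x ≠ 0) :
    toSphere (nuInf x) = toSphere x := by
  rw [nuInf_eq_smul, toSphere_smul (inv_pos.2 (norm_pos_iff.2 hx))]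

theorem truncQ_le {Q : ℕ} (hQ : 0 < Q) (a : ℝ) : truncQ Q a ≤ a := by
  rw [truncQ, div_le_iff₀' (by exact_mod_cast hQ)]
  exact Int.floor_le _

theorem lt_truncQ_add {Q : ℕ} (hQ : 0 < Q) (a : ℝ) : a < truncQ Q a + 1 / Q := by
  rw [truncQ, ← add_div, lt_div_iff₀' (by exact_mod_cast hQ)]
  exact Int.lt_floor_add_one _

theorem norm_truncCube_sub_le {m Q : ℕ} (hQ : 0 < Q) (x : Fin m → ℝ) :
    ‖truncCube Q x - x‖ ≤ 1 / Q := by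
  refine (pi_norm_le_iff_of_nonneg (by positivity)).2 fun k => ?_
  rw [Pi.sub_apply, truncCube]
  split_ifs
  · simp
  · rw [Real.norm_eq_abs, abs_sub_comm, abs_of_nonneg (sub_nonneg.2 (truncQ_le hQ _))]
    linarith [lt_truncQ_add hQ (x k)]

/-! ### The distance bound -/

-- By the law of cosines, `‖x - y‖² ≥ 2 ‖x‖ ‖y‖ (1 - cos θ)`, and `1 - cos θ ≥ 2 (θ / π)²`.
theorem angle_le_mul_norm_sub {E : Type*} [NormedAddCommGroup E] [InnerProductSpace ℝ E] {x y : E}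
    (hx : 1 ≤ ‖x‖) (hy : 1 ≤ ‖y‖) :
    InnerProductGeometry.angle x y ≤ Real.pi / 2 * ‖x - y‖ := by
  set θ := InnerProductGeometry.angle x y
  have hθ : 0 ≤ θ := InnerProductGeometry.angle_nonneg x y
  have hcos : Real.cos θ ≤ 1 - 2 / Real.pi ^ 2 * θ ^ 2 :=
    Real.cos_le_one_sub_mul_cos_sq
      ((abs_of_nonneg hθ).trans_le (InnerProductGeometry.angle_le_pi x y))
  have hxy : 1 ≤ ‖x‖ * ‖y‖ := one_le_mul_of_one_le_of_one_le hx hy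
  have hchord : 4 / Real.pi ^ 2 * θ ^ 2 ≤ ‖x - y‖ ^ 2 := by
    calc 4 / Real.pi ^ 2 * θ ^ 2 = 1 * (2 * (2 / Real.pi ^ 2 * θ ^ 2)) := by ring
      _ ≤ 1 * (2 * (1 - Real.cos θ)) := by linarith
      _ ≤ ‖x‖ * ‖y‖ * (2 * (1 - Real.cos θ)) := by
        gcongr; linarith [Real.cos_le_one θ]
      _ ≤ (‖x‖ - ‖y‖) ^ 2 + ‖x‖ * ‖y‖ * (2 * (1 - Real.cos θ)) := by
        linarith [sq_nonneg (‖x‖ - ‖y‖)]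
      _ = ‖x - y‖ ^ 2 := by
        rw [norm_sub_sq_real, ← InnerProductGeometry.cos_angle_mul_norm_mul_norm]
        ring
  refine (sq_le_sq₀ hθ (by positivity)).1 ?_
  calc θ ^ 2 = Real.pi ^ 2 / 4 * (4 / Real.pi ^ 2 * θ ^ 2) := by field_simp
    _ ≤ Real.pi ^ 2 / 4 * ‖x - y‖ ^ 2 := by gcongr
    _ = (Real.pi / 2 * ‖x - y‖) ^ 2 := by ring

theorem dSph_toSphere {m : ℕ} (x y : Fin m → ℝ) :
    dSph (toSphere x) (toSphere y) =
      InnerProductGeometry.angle (WithLp.toLp 2 x) (WithLp.toLp 2 y) := by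
  rw [dSph, InnerProductGeometry.angle, EuclideanSpace.norm_eq, EuclideanSpace.norm_eq,
    PiLp.inner_apply, Finset.sum_div]
  congr 1
  refine Finset.sum_congr rfl fun i _ => ?_
  simp only [toSphere, Pi.smul_apply, smul_eq_mul, Real.norm_eq_abs, sq_abs, RCLike.inner_apply,
    conj_trivial]
  ring

theorem norm_toLp_le_sqrt_card_mul_norm {ι : Type*} [Fintype ι] (x : ι → ℝ) :
    ‖WithLp.toLp 2 x‖ ≤ Real.sqrt (Fintype.card ι) * ‖x‖ := by
  have h := (PiLp.lipschitzWith_toLp 2 fun _ : ι => ℝ).norm_le_mul (WithLp.toLp_zero 2) x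
  rwa [NNReal.coe_rpow, NNReal.coe_natCast, ENNReal.toReal_div, ENNReal.toReal_one,
    ENNReal.toReal_ofNat, ← Real.sqrt_eq_rpow] at h

theorem dSph_truncSphere_le {N Q : ℕ} (hN : 0 < N) (hQ : 0 < Q) {u : Fin (2 * N) → ℝ}
    (hu : ∑ i, u i ^ 2 = 1) : dSph (truncSphere N Q u) u ≤ 3 * Real.sqrt N / Q := by
  obtain ⟨m, rfl⟩ := Nat.exists_eq_succ_of_ne_zero hN.ne'
  have hu₀ : u ≠ 0 := by
    rintro rfl
    simp at hu
  set x := nuInf u with hx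
  set a := truncCube Q x with ha
  obtain ⟨i, hi⟩ := exists_faceIdxN_eq (n := 2 * m + 1) x
  have hxi : |x i| = 1 := by
    rw [((faceIdxN_eq_iff (n := 2 * m + 1) x i).1 hi).1]
    exact norm_nuInf hu₀
  have hai : |a i| = 1 := by rw [ha, truncCube, if_pos hi.symm, hxi]
  have hone {z : Fin (2 * (m + 1)) → ℝ} (hz : |z i| = 1) : 1 ≤ ‖WithLp.toLp 2 z‖ :=
    hz.symm.trans_le (PiLp.norm_apply_le (WithLp.toLp 2 z) i)
  have hconst : Real.pi / 2 * Real.sqrt 2 ≤ 3 := by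
    have : Real.sqrt 2 ≤ 1.5 := Real.sqrt_le_iff.2 (by norm_num)
    nlinarith [Real.pi_lt_d2, Real.pi_pos, Real.sqrt_nonneg 2]
  calc dSph (truncSphere (m + 1) Q u) u = dSph (toSphere a) (toSphere x) := by
        rw [truncSphere_eq, hx, toSphere_nuInf hu₀, toSphere_eq_self hu]
    _ ≤ Real.pi / 2 * ‖WithLp.toLp 2 a - WithLp.toLp 2 x‖ := by
        rw [dSph_toSphere]
        exact angle_le_mul_norm_sub (hone hai) (hone hxi)
    _ ≤ Real.pi / 2 * (Real.sqrt (2 * (m + 1 : ℕ)) * (1 / Q)) := by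
        rw [← WithLp.toLp_sub]
        refine mul_le_mul_of_nonneg_left ?_ (by positivity)
        refine (norm_toLp_le_sqrt_card_mul_norm _).trans ?_
        rw [Fintype.card_fin, Nat.cast_mul, Nat.cast_ofNat]
        gcongr
        exact norm_truncCube_sub_le hQ x
    _ = Real.pi / 2 * Real.sqrt 2 * Real.sqrt (m + 1 : ℕ) / Q := by
        rw [Real.sqrt_mul zero_le_two]
        ring
    _ ≤ 3 * Real.sqrt (m + 1 : ℕ) / Q := by gcongr

/-! ### Integer and fractional parts under Lebesgue measure -/

/-- The uniform probability measure on the cube `[0,1)^ι`. -/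
def cubeMeasure (ι : Type*) [Fintype ι] : Measure (ι → ℝ) :=
  Measure.pi fun _ => volume.restrict (Set.Ico (0 : ℝ) 1)

instance : IsProbabilityMeasure ((volume : Measure ℝ).restrict (Set.Ico (0 : ℝ) 1)) :=
  ⟨by simp⟩

theorem floor_intCast_add_of_mem_cube {ι : Type*} (j : ι → ℤ) {y : ι → ℝ}
    (hy : ∀ k, y k ∈ Set.Ico (0 : ℝ) 1) :
    (fun k => ⌊(j k : ℝ) + y k⌋) = j := by
  funext k
  rw [Int.floor_intCast_add, Int.floor_eq_zero_iff.2 (hy k), add_zero]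

theorem fract_intCast_add_of_mem_cube {ι : Type*} (j : ι → ℤ) {y : ι → ℝ}
    (hy : ∀ k, y k ∈ Set.Ico (0 : ℝ) 1) :
    (fun k => Int.fract ((j k : ℝ) + y k)) = y := by
  funext k
  rw [Int.fract_intCast_add, Int.fract_eq_self.2 (hy k)]

section Cells

variable {ι : Type*} [Fintype ι]

instance : IsProbabilityMeasure (cubeMeasure ι) := by
  unfold cubeMeasure
  infer_instance

theorem cubeMeasure_eq_restrict :
    cubeMeasure ι = volume.restrict (Set.univ.pi fun _ => Set.Ico (0 : ℝ) 1) := by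
  rw [cubeMeasure, volume_pi, Measure.restrict_pi_pi]

theorem ae_cubeMeasure_mem : ∀ᵐ y ∂cubeMeasure ι, ∀ k, y k ∈ Set.Ico (0 : ℝ) 1 := by
  rw [cubeMeasure_eq_restrict]
  filter_upwards [ae_restrict_mem (MeasurableSet.univ_pi fun _ => measurableSet_Ico)] with y hy k
  exact hy k trivial

theorem lintegral_eq_mul_lintegral_comp_smul {E : Type*} [NormedAddCommGroup E] [NormedSpace ℝ E]
    [MeasurableSpace E] [BorelSpace E] [FiniteDimensional ℝ E] (μ : Measure E) [μ.IsAddHaarMeasure]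
    {r : ℝ} (hr : r ≠ 0) (g : E → ℝ≥0∞) :
    ∫⁻ x, g x ∂μ = ENNReal.ofReal (|r| ^ Module.finrank ℝ E) * ∫⁻ x, g (r • x) ∂μ := by
  have hmap : ∫⁻ x, g (r • x) ∂μ = ∫⁻ x, g x ∂(Measure.map (r • ·) μ) :=
    ((Homeomorph.smulOfNeZero r hr).measurableEmbedding.lintegral_map g).symm
  rw [hmap, Measure.map_addHaar_smul μ hr, lintegral_smul_measure, smul_eq_mul, ← mul_assoc,
    ← ENNReal.ofReal_mul (by positivity), abs_inv, abs_pow, mul_inv_cancel₀ (by positivity),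
    ENNReal.ofReal_one, one_mul]

theorem lintegral_eq_tsum_lintegral_cubeMeasure (g : (ι → ℝ) → ℝ≥0∞) :
    ∫⁻ z, g z = ∑' j : ι → ℤ, ∫⁻ y, g (fun k => j k + y k) ∂cubeMeasure ι := by
  let cell (j : ι → ℤ) : Set (ι → ℝ) := Set.univ.pi fun k => Set.Ico (j k : ℝ) (j k + 1)
  have mem_cell (j z) : z ∈ cell j ↔ (fun k => ⌊z k⌋) = j := by
    simp only [cell, Set.mem_univ_pi, Set.mem_Ico, funext_iff, Int.floor_eq_iff]
  have iUnion_cell : ⋃ j, cell j = Set.univ :=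
    Set.eq_univ_of_forall fun z => Set.mem_iUnion.2 ⟨_, (mem_cell _ z).2 rfl⟩
  have disjoint_cell : Pairwise (Function.onFun Disjoint cell) := fun i j hij =>
    Set.disjoint_left.2 fun z hi hj => hij (((mem_cell i z).1 hi).symm.trans ((mem_cell j z).1 hj))
  rw [← setLIntegral_univ, ← iUnion_cell,
    lintegral_iUnion (fun j => MeasurableSet.univ_pi fun _ => measurableSet_Ico) disjoint_cell]
  refine tsum_congr fun j => ?_
  let v : ι → ℝ := fun k => j k
  have hpre : (fun y => v + y) ⁻¹' cell j = Set.univ.pi fun _ => Set.Ico (0 : ℝ) 1 := by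
    ext y
    simp [cell, v]
  have htrans := measurePreserving_add_left (volume : Measure (ι → ℝ)) v
  rw [← htrans.setLIntegral_comp_preimage_emb (MeasurableEquiv.addLeft v).measurableEmbedding,
    hpre, cubeMeasure_eq_restrict]
  rfl

theorem lintegral_mul_le_of_ae_le_mul {α : Type*} [MeasurableSpace α] {μ : Measure α}
    [IsProbabilityMeasure μ] {h f : α → ℝ≥0∞} (hh : Measurable h) (hf : Measurable f) {C : ℝ≥0∞}
    (hC : ∀ᵐ x ∂μ, ∀ᵐ x' ∂μ, f x ≤ C * f x') :
    ∫⁻ x, h x * f x ∂μ ≤ C * ∫⁻ x, (∫⁻ x', h x' ∂μ) * f x ∂μ := by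
  have hmean : ∀ᵐ x ∂μ, f x ≤ C * ∫⁻ x', f x' ∂μ := by
    filter_upwards [hC] with x hx
    rw [← lintegral_const_mul _ hf]
    calc f x = ∫⁻ _, f x ∂μ := by simp
      _ ≤ ∫⁻ x', C * f x' ∂μ := lintegral_mono_ae hx
  calc ∫⁻ x, h x * f x ∂μ ≤ ∫⁻ x, h x * (C * ∫⁻ x', f x' ∂μ) ∂μ := by
        refine lintegral_mono_ae ?_
        filter_upwards [hmean] with x hx
        gcongr
    _ = C * ∫⁻ x, (∫⁻ x', h x' ∂μ) * f x ∂μ := by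
        rw [lintegral_mul_const _ hh, lintegral_const_mul _ hf, mul_left_comm]

-- Under Lebesgue measure the integer and fractional parts are independent, so only the oscillation
-- of `f` within a cell costs a factor.
theorem lintegral_floor_fract_le {h : (ι → ℤ) → (ι → ℝ) → ℝ≥0∞} (hh : ∀ j, Measurable (h j))
    {f : (ι → ℝ) → ℝ≥0∞} (hf : Measurable f) {C : ℝ≥0∞}
    (hC : ∀ z z' : ι → ℝ, (∀ k, ⌊z k⌋ = ⌊z' k⌋) → f z ≤ C * f z') :
    ∫⁻ z, h (fun k => ⌊z k⌋) (fun k => Int.fract (z k)) * f z ≤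
      C * ∫⁻ z, (∫⁻ y, h (fun k => ⌊z k⌋) y ∂cubeMeasure ι) * f z := by
  rw [lintegral_eq_tsum_lintegral_cubeMeasure, lintegral_eq_tsum_lintegral_cubeMeasure,
    ← ENNReal.tsum_mul_left]
  refine ENNReal.tsum_le_tsum fun j => ?_
  let F (y : ι → ℝ) : ℝ≥0∞ := f fun k => j k + y k
  have hF : Measurable F := hf.comp (by fun_prop)
  have hFC : ∀ᵐ y ∂cubeMeasure ι, ∀ᵐ y' ∂cubeMeasure ι, F y ≤ C * F y' := by
    filter_upwards [ae_cubeMeasure_mem] with y hy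
    filter_upwards [ae_cubeMeasure_mem] with y' hy'
    refine hC _ _ fun k => ?_
    rw [congrFun (floor_intCast_add_of_mem_cube j hy) k,
      congrFun (floor_intCast_add_of_mem_cube j hy') k]
  calc ∫⁻ y, h (fun k => ⌊(j k : ℝ) + y k⌋) (fun k => Int.fract ((j k : ℝ) + y k)) * F y
        ∂cubeMeasure ι
      = ∫⁻ y, h j y * F y ∂cubeMeasure ι := by
        refine lintegral_congr_ae ?_
        filter_upwards [ae_cubeMeasure_mem] with y hy
        rw [floor_intCast_add_of_mem_cube j hy, fract_intCast_add_of_mem_cube j hy]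
    _ ≤ C * ∫⁻ y, (∫⁻ y', h j y' ∂cubeMeasure ι) * F y ∂cubeMeasure ι :=
        lintegral_mul_le_of_ae_le_mul (hh j) hF hFC
    _ = _ := by
        congr 1
        refine lintegral_congr_ae ?_
        filter_upwards [ae_cubeMeasure_mem] with y hy
        rw [floor_intCast_add_of_mem_cube j hy]

theorem lintegral_floor_fract_mul_le {c : ℝ} (hc : c ≠ 0) {h : (ι → ℤ) → (ι → ℝ) → ℝ≥0∞}
    (hh : ∀ j, Measurable (h j)) {f : (ι → ℝ) → ℝ≥0∞} (hf : Measurable f) {C : ℝ≥0∞}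
    (hC : ∀ w w' : ι → ℝ, (∀ k, ⌊c * w k⌋ = ⌊c * w' k⌋) → f w ≤ C * f w') :
    ∫⁻ w, h (fun k => ⌊c * w k⌋) (fun k => Int.fract (c * w k)) * f w ≤
      C * ∫⁻ w, (∫⁻ y, h (fun k => ⌊c * w k⌋) y ∂cubeMeasure ι) * f w := by
  have hc' : c⁻¹ ≠ 0 := inv_ne_zero hc
  rw [lintegral_eq_mul_lintegral_comp_smul volume hc',
    lintegral_eq_mul_lintegral_comp_smul volume hc' fun w => _ * f w, mul_left_comm]
  simp only [Pi.smul_apply, smul_eq_mul, mul_inv_cancel_left₀ hc]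
  gcongr
  refine lintegral_floor_fract_le hh (hf.comp (measurable_const_smul c⁻¹)) fun z z' hz => ?_
  refine hC _ _ fun k => ?_
  simpa only [Pi.smul_apply, smul_eq_mul, mul_inv_cancel_left₀ hc] using hz k

end Cells

/-! ### Products of densities -/

section PiDensity

variable {ι : Type*} [Fintype ι] {α : ι → Type*} [∀ i, MeasurableSpace (α i)]
  (μ : ∀ i, Measure (α i)) [∀ i, SigmaFinite (μ i)] {f : ∀ i, α i → ℝ≥0∞}

theorem lintegral_pi_prod (hf : ∀ i, Measurable (f i)) :
    ∫⁻ x, ∏ i, f i (x i) ∂Measure.pi μ = ∏ i, ∫⁻ t, f i t ∂μ i := by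
  classical
  have hmeas (s : Finset ι) : Measurable fun x : ∀ i, α i => ∏ i ∈ s, f i (x i) := by fun_prop
  have hmarginal (s : Finset ι) (x : ∀ i, α i) :
      (∫⋯∫⁻_s, (fun x => ∏ i ∈ s, f i (x i)) ∂μ) x = ∏ i ∈ s, ∫⁻ t, f i t ∂μ i := by
    induction s using Finset.induction_on generalizing x with
    | empty => simp
    | insert i s hi ih =>
      have hinner (z : ∀ i, α i) :
          ∫⁻ t, ∏ k ∈ insert i s, f k (Function.update z i t k) ∂μ i =
            (∫⁻ t, f i t ∂μ i) * ∏ k ∈ s, f k (z k) := by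
        rw [← lintegral_mul_const _ (hf i)]
        refine lintegral_congr fun t => ?_
        rw [Finset.prod_insert hi, Function.update_self]
        congr 1
        refine Finset.prod_congr rfl fun k hk => ?_
        rw [Function.update_of_ne (ne_of_mem_of_not_mem hk hi)]
      rw [lmarginal_insert' _ (hmeas _) hi, Finset.prod_insert hi, ← ih x]
      simp only [hinner, lmarginal]
      exact lintegral_const_mul _ ((hmeas s).comp measurable_updateFinset)
  rcases isEmpty_or_nonempty (∀ i, α i) with hα | ⟨⟨x⟩⟩
  · obtain ⟨i, hi⟩ := not_forall.1 fun h => hα.elim fun i => Classical.choice (h i)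
    rw [not_nonempty_iff] at hi
    rw [Finset.prod_eq_zero (Finset.mem_univ i) (by simp [Measure.eq_zero_of_isEmpty]),
      Measure.eq_zero_of_isEmpty (Measure.pi μ), lintegral_zero_measure]
  · rw [lintegral_eq_lmarginal_univ x, hmarginal]

theorem pi_withDensity (hf : ∀ i, Measurable (f i)) [∀ i, SigmaFinite ((μ i).withDensity (f i))] :
    (Measure.pi fun i => (μ i).withDensity (f i)) =
      (Measure.pi μ).withDensity fun x => ∏ i, f i (x i) := by
  refine Measure.pi_eq fun s hs => ?_
  have hbox : (Set.univ.pi s).indicator (fun x => ∏ i, f i (x i)) =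
      fun x => ∏ i, (s i).indicator (f i) (x i) := by
    classical
    funext x
    simp only [Set.indicator_apply, Set.mem_univ_pi, Finset.prod_ite_zero, Finset.mem_univ,
      forall_const]
  rw [withDensity_apply _ (MeasurableSet.univ_pi hs), ← lintegral_indicator (.univ_pi hs), hbox,
    lintegral_pi_prod μ fun i => (hf i).indicator (hs i)]
  refine Finset.prod_congr rfl fun i _ => ?_
  rw [lintegral_indicator (hs i), withDensity_apply _ (hs i)]

end PiDensity

/-- The standard Gaussian measure on `ℝ^ι`. -/
def stdGaussianPi (ι : Type*) [Fintype ι] : Measure (ι → ℝ) := Measure.pi fun _ => gaussianReal 0 1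

section Gaussian

variable {ι : Type*} [Fintype ι]

instance : IsProbabilityMeasure (stdGaussianPi ι) := by
  unfold stdGaussianPi
  infer_instance

theorem lintegral_stdGaussianPi {g : (ι → ℝ) → ℝ≥0∞} (hg : Measurable g) :
    ∫⁻ x, g x ∂stdGaussianPi ι = ∫⁻ x, (∏ k, gaussianPDF 0 1 (x k)) * g x := by
  have hpdf := gaussianReal_of_var_ne_zero 0 one_ne_zero
  have : SigmaFinite (volume.withDensity (gaussianPDF 0 1)) := by
    rw [← hpdf]
    infer_instance
  have hm := measurable_gaussianPDF 0 1
  rw [stdGaussianPi, hpdf, pi_withDensity _ fun _ => hm, ← volume_pi,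
    lintegral_withDensity_eq_lintegral_mul _ (by fun_prop) hg]
  rfl

theorem prod_gaussianPDF (x : ι → ℝ) :
    ∏ k, gaussianPDF 0 1 (x k) = ENNReal.ofReal
      ((Real.sqrt (2 * Real.pi))⁻¹ ^ Fintype.card ι * Real.exp (-(∑ k, x k ^ 2) / 2)) := by
  simp only [gaussianPDF, gaussianPDFReal]
  rw [← ENNReal.ofReal_prod_of_nonneg fun _ _ => by positivity, Finset.prod_mul_distrib,
    ← Real.exp_sum, ← Finset.sum_div, Finset.sum_neg_distrib]
  simp

end Gaussian

/-! ### The density of the projected Gaussian measure on a face of the cube -/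

/-- The density, with respect to Lebesgue measure on a face `{x_i = ±1}` of the cube
`[-1,1]^(n+1)`, of the radial projection of the standard Gaussian measure of `ℝ^(n+1)` to the
surface of the cube; the face is parametrized by the `n` other coordinates. -/
def coneDensity (n : ℕ) (w : Fin n → ℝ) : ℝ≥0∞ :=
  ENNReal.ofReal (Real.Gamma ((n + 1) / 2) / (2 * Real.pi ^ ((n + 1) / 2 : ℝ)) *
    (1 + ∑ k, w k ^ 2) ^ (-((n + 1) / 2) : ℝ))

theorem measurable_coneDensity (n : ℕ) : Measurable (coneDensity n) := by
  unfold coneDensity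
  fun_prop

theorem lintegral_pow_mul_exp_neg_mul_sq (n : ℕ) {b : ℝ} (hb : 0 < b) :
    ∫⁻ r in Set.Ioi (0 : ℝ), ENNReal.ofReal (r ^ n * Real.exp (-b * r ^ 2)) =
      ENNReal.ofReal (b ^ (-((n + 1) / 2) : ℝ) * (Real.Gamma ((n + 1) / 2) / 2)) := by
  have hn : (-1 : ℝ) < n := neg_one_lt_zero.trans_le n.cast_nonneg
  have hint := integrableOn_rpow_mul_exp_neg_mul_rpow hn two_pos hb
  have hval := integral_rpow_mul_exp_neg_mul_rpow two_pos hn hb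
  simp only [Real.rpow_natCast, Real.rpow_two] at hint hval
  rw [← ofReal_integral_eq_lintegral_ofReal hint, hval, neg_div]
  · congr 1
    ring
  · filter_upwards [ae_restrict_mem measurableSet_Ioi] with r hr
    have : (0 : ℝ) < r := hr
    positivity

theorem sum_sq_smul_insertNth {n : ℕ} (i : Fin (n + 1)) (r : ℝ) {ε : ℝ} (hε : |ε| = 1)
    (w : Fin n → ℝ) :
    ∑ k, (r • (i.insertNth ε w : Fin (n + 1) → ℝ)) k ^ 2 = r ^ 2 * (1 + ∑ k, w k ^ 2) := by
  simp only [Pi.smul_apply, smul_eq_mul, mul_pow, ← Finset.mul_sum, Fin.sum_univ_succAbove _ i,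
    Fin.insertNth_apply_same, Fin.insertNth_apply_succAbove]
  rw [← sq_abs ε, hε, one_pow, mul_add]

theorem lintegral_radial_gaussianPDF {n : ℕ} (i : Fin (n + 1)) {ε : ℝ} (hε : |ε| = 1)
    (w : Fin n → ℝ) :
    ∫⁻ r in Set.Ioi (0 : ℝ), ENNReal.ofReal (r ^ n) *
      ∏ k, gaussianPDF 0 1 ((r • (i.insertNth ε w : Fin (n + 1) → ℝ)) k) = coneDensity n w := by
  set b := 1 + ∑ k, w k ^ 2 with hb
  have hbpos : 0 < b := by positivity
  set c := (Real.sqrt (2 * Real.pi))⁻¹ ^ (n + 1) with hc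
  have hcpow : c = (2 * Real.pi) ^ (-((n + 1) / 2) : ℝ) := by
    rw [hc, inv_pow, Real.rpow_neg (by positivity), Real.sqrt_eq_rpow, ← Real.rpow_mul_natCast
      (by positivity)]
    congr 2
    push_cast
    ring
  have hintegrand : ∀ r ∈ Set.Ioi (0 : ℝ), ENNReal.ofReal (r ^ n) *
      ∏ k, gaussianPDF 0 1 ((r • (i.insertNth ε w : Fin (n + 1) → ℝ)) k) =
        ENNReal.ofReal c * ENNReal.ofReal (r ^ n * Real.exp (-(b / 2) * r ^ 2)) := by
    intro r hr
    have : (0 : ℝ) < r := hr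
    rw [prod_gaussianPDF, sum_sq_smul_insertNth i r hε, Fintype.card_fin,
      ← ENNReal.ofReal_mul (by positivity), ← ENNReal.ofReal_mul (by positivity), ← hb, ← hc]
    ring_nf
  rw [setLIntegral_congr_fun measurableSet_Ioi hintegrand,
    lintegral_const_mul' _ _ ENNReal.ofReal_ne_top,
    lintegral_pow_mul_exp_neg_mul_sq n (half_pos hbpos), ← ENNReal.ofReal_mul (by positivity),
    coneDensity, ← hb, hcpow, Real.div_rpow hbpos.le zero_le_two,
    Real.mul_rpow zero_le_two Real.pi_pos.le, Real.rpow_neg zero_le_two,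
    Real.rpow_neg Real.pi_pos.le]
  congr 1
  field_simp

theorem one_add_norm_sq_le {E : Type*} [SeminormedAddCommGroup E] {x y : E} {δ : ℝ}
    (h : ‖x - y‖ ≤ δ) : 1 + ‖x‖ ^ 2 ≤ (1 + δ + δ ^ 2) * (1 + ‖y‖ ^ 2) := by
  have hδ : 0 ≤ δ := (norm_nonneg _).trans h
  have hx : ‖x‖ ≤ ‖y‖ + δ := by linarith [norm_sub_norm_le x y]
  calc 1 + ‖x‖ ^ 2 ≤ 1 + (‖y‖ + δ) ^ 2 := by gcongr
    _ = 1 + ‖y‖ ^ 2 + δ * (2 * ‖y‖ * 1) + δ ^ 2 * 1 := by ring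
    _ ≤ 1 + ‖y‖ ^ 2 + δ * (‖y‖ ^ 2 + 1 ^ 2) + δ ^ 2 * (1 + ‖y‖ ^ 2) := by
      gcongr
      · exact two_mul_le_add_sq _ _
      · linarith [sq_nonneg ‖y‖]
    _ = (1 + δ + δ ^ 2) * (1 + ‖y‖ ^ 2) := by ring

theorem norm_sub_le_of_floor_mul_eq {ι : Type*} [Fintype ι] {c : ℝ} (hc : 0 < c) {w w' : ι → ℝ}
    (h : ∀ k, ⌊c * w k⌋ = ⌊c * w' k⌋) : ‖w - w'‖ ≤ 1 / c := by
  refine (pi_norm_le_iff_of_nonneg (by positivity)).2 fun k => ?_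
  have hk : |c * w k - c * w' k| < 1 := Int.abs_sub_lt_one_of_floor_eq_floor (h k)
  rw [← mul_sub, abs_mul, abs_of_pos hc] at hk
  exact (le_div_iff₀' hc).2 hk.le

theorem coneDensity_le_of_floor_mul_eq {n : ℕ} {c : ℝ} (hc : 0 < c) {w w' : Fin n → ℝ}
    (h : ∀ k, ⌊c * w k⌋ = ⌊c * w' k⌋) :
    coneDensity n w ≤ ENNReal.ofReal
      ((1 + Real.sqrt n / c + (Real.sqrt n / c) ^ 2) ^ ((n + 1) / 2 : ℝ)) * coneDensity n w' := by
  set δ := Real.sqrt n / c with hδ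
  have hdist : ‖WithLp.toLp 2 w' - WithLp.toLp 2 w‖ ≤ δ := by
    rw [← WithLp.toLp_sub]
    refine (norm_toLp_le_sqrt_card_mul_norm _).trans ?_
    rw [hδ, ← mul_one_div, Fintype.card_fin, norm_sub_rev]
    gcongr
    exact norm_sub_le_of_floor_mul_eq hc h
  have hbase := one_add_norm_sq_le hdist
  simp only [EuclideanSpace.real_norm_sq_eq] at hbase
  rw [coneDensity, coneDensity, ← ENNReal.ofReal_mul (by positivity)]
  set b := 1 + ∑ k, w k ^ 2
  set b' := 1 + ∑ k, w' k ^ 2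
  have hb : 0 < b := by positivity
  have hb' : 0 < b' := by positivity
  set p : ℝ := (n + 1) / 2
  set D := 1 + δ + δ ^ 2
  have hD : 0 < D := by positivity
  have hpow : b ^ (-p) ≤ D ^ p * b' ^ (-p) := by
    rw [Real.rpow_neg hb.le, Real.rpow_neg hb'.le, ← div_eq_mul_inv, inv_le_comm₀ (by positivity)
      (by positivity), inv_div, div_le_iff₀' (by positivity), ← Real.mul_rpow hD.le hb.le]
    exact Real.rpow_le_rpow hb'.le hbase (by positivity)
  apply ENNReal.ofReal_le_ofReal
  rw [mul_left_comm]
  gcongr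

-- With `s = √N / Q` the cell diameter is at most `√2 s`, and `1 + √2 s + 2 s² ≤ exp (2 s)`.
theorem coneDensity_le_exp_mul {N Q : ℕ} (hQ : 0 < Q) {n : ℕ} (hn : n + 1 = 2 * N)
    {w w' : Fin n → ℝ} (h : ∀ k, ⌊(Q : ℝ) * w k⌋ = ⌊(Q : ℝ) * w' k⌋) :
    coneDensity n w ≤
      ENNReal.ofReal (Real.exp (2 * (N : ℝ) ^ (3 / 2 : ℝ) / Q)) * coneDensity n w' := by
  refine (coneDensity_le_of_floor_mul_eq (Nat.cast_pos.2 hQ) h).trans ?_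
  gcongr
  have hn' : (n : ℝ) + 1 = 2 * N := by exact_mod_cast hn
  set s := Real.sqrt N / Q with hs
  have hsq : Real.sqrt n / Q ≤ Real.sqrt 2 * s := by
    rw [hs, ← mul_div_assoc, ← Real.sqrt_mul zero_le_two]
    gcongr
    linarith
  have hsqrt : Real.sqrt 2 ≤ 2 := Real.sqrt_le_iff.2 (by norm_num)
  have hN : (N : ℝ) ^ (3 / 2 : ℝ) = N * Real.sqrt N := by
    rw [Real.sqrt_eq_rpow, ← Real.rpow_one_add' N.cast_nonneg (by norm_num)]
    norm_num
  calc (1 + Real.sqrt n / Q + (Real.sqrt n / Q) ^ 2) ^ ((n + 1) / 2 : ℝ)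
      ≤ (1 + Real.sqrt 2 * s + (Real.sqrt 2 * s) ^ 2) ^ ((n + 1) / 2 : ℝ) := by gcongr
    _ = (1 + Real.sqrt 2 * s + 2 * s ^ 2) ^ N := by
      rw [mul_pow, Real.sq_sqrt zero_le_two, hn', mul_div_cancel_left₀ _ two_ne_zero,
        Real.rpow_natCast]
    _ ≤ (1 + 2 * s + (2 * s) ^ 2 / 2) ^ N := by
      rw [mul_pow, show (2 : ℝ) ^ 2 * s ^ 2 / 2 = 2 * s ^ 2 by ring]
      gcongr
    _ ≤ Real.exp (2 * s) ^ N := by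
      gcongr
      exact Real.quadratic_le_exp_of_nonneg (by positivity)
    _ = Real.exp (2 * (N : ℝ) ^ (3 / 2 : ℝ) / Q) := by
      rw [← Real.exp_nat_mul, hN, hs]
      ring_nf

/-! ### Polar coordinates with respect to the cube -/

/-- The half-open cube `[-1,1)^n`: up to a null set, a face of `[-1,1]^(n+1)`. -/
def faceCube (n : ℕ) : Set (Fin n → ℝ) := Set.univ.pi fun _ => Set.Ico (-1) 1

theorem measurableSet_faceCube (n : ℕ) : MeasurableSet (faceCube n) :=
  MeasurableSet.univ_pi fun _ => measurableSet_Ico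

theorem ae_abs_ne_one {ι : Type*} [Fintype ι] : ∀ᵐ w : ι → ℝ, ∀ k, |w k| ≠ 1 := by
  refine ae_all_iff.2 fun k => ?_
  have hne (c : ℝ) : ∀ᵐ w : ι → ℝ, w k ≠ c :=
    Measure.ae_eval_ne (fun _ : ι => (volume : Measure ℝ)) k c
  filter_upwards [hne 1, hne (-1)] with w h₁ h₂ h
  exact (eq_or_eq_neg_of_abs_eq h).elim h₁ h₂

theorem mem_faceCube_iff_norm_le_one {n : ℕ} {w : Fin n → ℝ} (hw : ∀ k, |w k| ≠ 1) :
    w ∈ faceCube n ↔ ‖w‖ ≤ 1 := by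
  rw [pi_norm_le_iff_of_nonneg zero_le_one, faceCube, Set.mem_univ_pi]
  refine forall_congr' fun k => ⟨fun h => abs_le.2 ⟨h.1, h.2.le⟩, fun h => ?_⟩
  have hlt := abs_lt.1 (lt_of_le_of_ne h (hw k))
  exact ⟨hlt.1.le, hlt.2⟩

theorem norm_insertNth_real {n : ℕ} (i : Fin (n + 1)) (ε : ℝ) (w : Fin n → ℝ) :
    ‖(i.insertNth ε w : Fin (n + 1) → ℝ)‖ = max |ε| ‖w‖ := by
  refine le_antisymm ((pi_norm_le_iff_of_nonneg (by positivity)).2 fun k => ?_)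
    (max_le ?_ ((pi_norm_le_iff_of_nonneg (norm_nonneg _)).2 fun k => ?_))
  · induction k using Fin.succAboveCases i with
    | x => simp
    | p k => simpa using Or.inr (norm_le_pi_norm w k)
  · simpa using norm_le_pi_norm (i.insertNth ε w : Fin (n + 1) → ℝ) i
  · simpa using norm_le_pi_norm (i.insertNth ε w : Fin (n + 1) → ℝ) (i.succAbove k)

theorem faceIdxN_insertNth_eq_iff {n : ℕ} (i : Fin (n + 1)) {ε : ℝ} (hε : |ε| = 1) {w : Fin n → ℝ}
    (hw : ∀ k, |w k| ≠ 1) :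
    faceIdxN (i.insertNth ε w : Fin (n + 1) → ℝ) = i ↔ w ∈ faceCube n := by
  rw [faceIdxN_eq_iff, norm_insertNth_real, Fin.insertNth_apply_same, hε,
    mem_faceCube_iff_norm_le_one hw, eq_comm, max_eq_left_iff, and_iff_left_of_imp]
  intro h k hk
  obtain ⟨j, rfl⟩ := Fin.exists_succAbove_eq hk.ne
  rw [Fin.insertNth_apply_succAbove, max_eq_left h]
  exact hw j

theorem faceIdxN_smul {m : ℕ} {c : ℝ} (hc : c ≠ 0) (x : Fin m → ℝ) :
    faceIdxN (c • x) = faceIdxN x := by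
  simp only [faceIdxN, normInf_eq_norm, norm_smul, Pi.smul_apply, smul_eq_mul, abs_mul,
    Real.norm_eq_abs, mul_right_inj' (abs_ne_zero.2 hc)]

theorem measurable_faceIdxN {n : ℕ} : Measurable (faceIdxN : (Fin (n + 1) → ℝ) → ℕ) := by
  refine measurable_to_countable' fun k => ?_
  by_cases hk : k < n + 1
  · have hpre : faceIdxN ⁻¹' {k} = {x : Fin (n + 1) → ℝ | |x ⟨k, hk⟩| = ‖x‖ ∧
        ∀ j < (⟨k, hk⟩ : Fin (n + 1)), |x j| ≠ ‖x‖} :=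
      Set.ext fun x => faceIdxN_eq_iff x ⟨k, hk⟩
    rw [hpre]
    measurability
  · have hpre : (faceIdxN : (Fin (n + 1) → ℝ) → ℕ) ⁻¹' {k} = ∅ := by
      refine Set.eq_empty_of_forall_notMem fun x hx => hk ?_
      obtain ⟨i, hi⟩ := exists_faceIdxN_eq x
      exact (Set.mem_singleton_iff.1 hx).symm.trans hi ▸ i.2
    rw [hpre]
    exact MeasurableSet.empty

theorem abs_eq_one_of_mem {ε : ℝ} (hε : ε ∈ ({1, -1} : Finset ℝ)) : |ε| = 1 := by
  rcases Finset.mem_insert.1 hε with rfl | h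
  · exact abs_one
  · rw [Finset.mem_singleton.1 h, abs_neg, abs_one]

theorem lintegral_eq_sum_setLIntegral_Ioi (g : ℝ → ℝ≥0∞) :
    ∫⁻ t, g t = ∑ ε ∈ ({1, -1} : Finset ℝ), ∫⁻ r in Set.Ioi 0, g (r * ε) := by
  have hneg : ∫⁻ r in Set.Ioi 0, g (-r) = ∫⁻ t in Set.Iic 0, g t := by
    have h := (Measure.measurePreserving_neg (volume : Measure ℝ)).setLIntegral_comp_preimage_emb
      (Homeomorph.neg ℝ).measurableEmbedding g (Set.Iic 0)
    rw [← h, Set.neg_preimage, Set.neg_Iic, neg_zero]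
    exact setLIntegral_congr Ioi_ae_eq_Ici
  rw [Finset.sum_pair (by norm_num)]
  simp only [mul_one, mul_neg]
  rw [hneg, ← Set.compl_Ioi, lintegral_add_compl _ measurableSet_Ioi]

theorem smul_insertNth_real {n : ℕ} (i : Fin (n + 1)) (r ε : ℝ) (w : Fin n → ℝ) :
    r • (i.insertNth ε w : Fin (n + 1) → ℝ) = i.insertNth (r * ε) (r • w) := by
  funext k
  induction k using Fin.succAboveCases i with
  | x => simp
  | p k => simp

theorem measurable_insertNth {n : ℕ} (i : Fin (n + 1)) :
    Measurable fun p : ℝ × (Fin n → ℝ) => (i.insertNth p.1 p.2 : Fin (n + 1) → ℝ) :=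
  (MeasurableEquiv.piFinSuccAbove (fun _ : Fin (n + 1) => ℝ) i).symm.measurable

-- The coordinates are `x = r • (ε, w)` with `r = |x i|`.
theorem lintegral_eq_sum_lintegral_rays {n : ℕ} (i : Fin (n + 1)) {G : (Fin (n + 1) → ℝ) → ℝ≥0∞}
    (hG : Measurable G) :
    ∫⁻ x, G x = ∑ ε ∈ ({1, -1} : Finset ℝ), ∫⁻ w : Fin n → ℝ, ∫⁻ r in Set.Ioi (0 : ℝ),
      ENNReal.ofReal (r ^ n) * G (r • (i.insertNth ε w : Fin (n + 1) → ℝ)) := by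
  have hins := hG.comp (measurable_insertNth i)
  have hsplit : ∫⁻ x, G x = ∫⁻ t : ℝ, ∫⁻ v : Fin n → ℝ, G (i.insertNth t v) := by
    rw [← (volume_preserving_piFinSuccAbove (fun _ => ℝ) i).symm.lintegral_comp_emb
      (MeasurableEquiv.measurableEmbedding _) G, Measure.volume_eq_prod]
    exact lintegral_prod _ hins.aemeasurable
  rw [hsplit, lintegral_eq_sum_setLIntegral_Ioi]
  refine Finset.sum_congr rfl fun ε _ => ?_
  have hscale : ∀ r ∈ Set.Ioi (0 : ℝ), ∫⁻ v : Fin n → ℝ, G (i.insertNth (r * ε) v) =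
      ∫⁻ w : Fin n → ℝ, ENNReal.ofReal (r ^ n) * G (r • i.insertNth ε w) := by
    intro r hr
    rw [lintegral_eq_mul_lintegral_comp_smul volume (ne_of_gt hr), Module.finrank_fin_fun,
      abs_of_pos hr, lintegral_const_mul' _ _ ENNReal.ofReal_ne_top]
    simp only [smul_insertNth_real]
  rw [setLIntegral_congr_fun measurableSet_Ioi hscale, lintegral_lintegral_swap]
  have hmeas : Measurable fun p : ℝ × (Fin n → ℝ) =>
      p.1 • (i.insertNth ε p.2 : Fin (n + 1) → ℝ) :=
    measurable_fst.smul ((measurable_insertNth i).comp (measurable_const.prodMk measurable_snd))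
  exact ((measurable_fst.pow_const n).ennreal_ofReal.mul (hG.comp hmeas)).aemeasurable

theorem lintegral_eq_sum_faces {n : ℕ} {G : (Fin (n + 1) → ℝ) → ℝ≥0∞} (hG : Measurable G) :
    ∫⁻ x, G x = ∑ i : Fin (n + 1), ∑ ε ∈ ({1, -1} : Finset ℝ), ∫⁻ w in faceCube n,
      ∫⁻ r in Set.Ioi (0 : ℝ),
        ENNReal.ofReal (r ^ n) * G (r • (i.insertNth ε w : Fin (n + 1) → ℝ)) := by
  let cone (i : Fin (n + 1)) : Set (Fin (n + 1) → ℝ) := {x | faceIdxN x = i}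
  have measurableSet_cone (i) : MeasurableSet (cone i) :=
    measurable_faceIdxN (measurableSet_singleton (i : ℕ))
  have iUnion_cone : ⋃ i, cone i = Set.univ :=
    Set.eq_univ_of_forall fun x => Set.mem_iUnion.2 (exists_faceIdxN_eq x)
  have disjoint_cone : Pairwise (Function.onFun Disjoint cone) := fun i j hij =>
    Set.disjoint_left.2 fun x hi hj => hij (Fin.ext (Eq.trans (Eq.symm hi) hj))
  rw [← setLIntegral_univ, ← iUnion_cone, lintegral_iUnion measurableSet_cone disjoint_cone,
    tsum_fintype]
  refine Finset.sum_congr rfl fun i _ => ?_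
  rw [← lintegral_indicator (measurableSet_cone i),
    lintegral_eq_sum_lintegral_rays i (hG.indicator (measurableSet_cone i))]
  refine Finset.sum_congr rfl fun ε hε => ?_
  have hε' : |ε| = 1 := abs_eq_one_of_mem hε
  rw [← lintegral_indicator (measurableSet_faceCube n)]
  refine lintegral_congr_ae ?_
  filter_upwards [ae_abs_ne_one] with w hw
  have hcone : ∀ r ∈ Set.Ioi (0 : ℝ), r • (i.insertNth ε w : Fin (n + 1) → ℝ) ∈ cone i ↔
      w ∈ faceCube n := fun r hr => by
    rw [← faceIdxN_insertNth_eq_iff i hε' hw, ← faceIdxN_smul (ne_of_gt hr)]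
    rfl
  by_cases hwc : w ∈ faceCube n
  · rw [Set.indicator_of_mem hwc]
    refine setLIntegral_congr_fun measurableSet_Ioi fun r hr => ?_
    simp only [Set.indicator_of_mem ((hcone r hr).2 hwc)]
  · rw [Set.indicator_of_notMem hwc]
    refine setLIntegral_eq_zero measurableSet_Ioi fun r hr => ?_
    simp only [Set.indicator_of_notMem (mt (hcone r hr).1 hwc), mul_zero, Pi.zero_apply]

theorem lintegral_stdGaussianPi_eq_sum_faces {n : ℕ} {H : (Fin (n + 1) → ℝ) → ℝ≥0∞}
    (hH : Measurable H) (hom : ∀ c : ℝ, 0 < c → ∀ x, H (c • x) = H x) :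
    ∫⁻ x, H x ∂stdGaussianPi (Fin (n + 1)) =
      ∑ i : Fin (n + 1), ∑ ε ∈ ({1, -1} : Finset ℝ), ∫⁻ w in faceCube n,
        H (i.insertNth ε w) * coneDensity n w := by
  have := measurable_gaussianPDF 0 1
  rw [lintegral_stdGaussianPi hH,
    lintegral_eq_sum_faces (G := fun x => (∏ k, gaussianPDF 0 1 (x k)) * H x) (by fun_prop)]
  refine Finset.sum_congr rfl fun i _ => Finset.sum_congr rfl fun ε hε => ?_
  refine lintegral_congr fun w => ?_
  rw [← lintegral_radial_gaussianPDF i (abs_eq_one_of_mem hε),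
    ← lintegral_const_mul _ (by fun_prop)]
  refine setLIntegral_congr_fun measurableSet_Ioi fun r hr => ?_
  simp only [hom r hr]
  ring

/-! ### Near-independence of truncation and digits -/

/-- The digits beyond precision `Q` of the non-face coordinates of a point of the cube: `B'_Q`. -/
def digits {n : ℕ} (Q : ℕ) (x : Fin (n + 1) → ℝ) : Fin n → ℝ := fun j =>
  Int.fract ((Q : ℝ) * if j.val < faceIdxN x then x j.castSucc else x j.succ)

theorem sub_truncQ_mul (Q : ℕ) (a : ℝ) : (a - truncQ Q a) * Q = Int.fract ((Q : ℝ) * a) := by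
  rcases eq_or_ne (Q : ℝ) 0 with hQ | hQ
  · simp [hQ]
  · rw [truncQ, Int.fract, sub_mul, div_mul_cancel₀ _ hQ, mul_comm]

theorem fracSphere_eq (m Q : ℕ) (u : Fin (2 * (m + 1)) → ℝ) :
    fracSphere (m + 1) Q u = sibuya (m + 1) (digits (n := 2 * m + 1) Q (nuInf u)) := by
  refine congrArg (sibuya (m + 1)) (funext fun j => ?_)
  have hj : j.val < 2 * m + 1 := j.2
  rw [digits]
  dsimp only
  split_ifs
  · exact sub_truncQ_mul _ _
  · omega
  · exact sub_truncQ_mul _ _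
  · omega

theorem measurable_nuInf {m : ℕ} : Measurable (nuInf : (Fin m → ℝ) → Fin m → ℝ) := by
  simp only [funext nuInf_eq_smul]
  fun_prop

theorem measurable_truncQ (Q : ℕ) : Measurable (truncQ Q) := by
  unfold truncQ
  fun_prop

theorem measurable_truncCube {n : ℕ} (Q : ℕ) :
    Measurable (truncCube Q : (Fin (n + 1) → ℝ) → Fin (n + 1) → ℝ) :=
  measurable_pi_lambda _ fun k =>
    .ite (measurableSet_eq_fun measurable_const measurable_faceIdxN) (measurable_pi_apply k)
      ((measurable_truncQ Q).comp (measurable_pi_apply k))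

theorem measurable_digits {n : ℕ} (Q : ℕ) :
    Measurable (digits Q : (Fin (n + 1) → ℝ) → Fin n → ℝ) :=
  measurable_pi_lambda _ fun _ => measurable_fract.comp <| .const_mul
    (.ite (measurableSet_lt measurable_const measurable_faceIdxN) (measurable_pi_apply _)
      (measurable_pi_apply _)) _

theorem truncCube_insertNth {n : ℕ} (Q : ℕ) {i : Fin (n + 1)} {ε : ℝ} {w : Fin n → ℝ}
    (hi : faceIdxN (i.insertNth ε w : Fin (n + 1) → ℝ) = i) :
    truncCube Q (i.insertNth ε w : Fin (n + 1) → ℝ) = i.insertNth ε fun k => truncQ Q (w k) := by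
  funext k
  rw [truncCube, hi]
  induction k using Fin.succAboveCases i with
  | x => simp
  | p k =>
    rw [if_neg (Fin.val_ne_of_ne (Fin.succAbove_ne i k)), Fin.insertNth_apply_succAbove,
      Fin.insertNth_apply_succAbove]

theorem digits_insertNth {n : ℕ} (Q : ℕ) {i : Fin (n + 1)} {ε : ℝ} {w : Fin n → ℝ}
    (hi : faceIdxN (i.insertNth ε w : Fin (n + 1) → ℝ) = i) :
    digits Q (i.insertNth ε w : Fin (n + 1) → ℝ) = fun k => Int.fract ((Q : ℝ) * w k) := by
  funext j
  rw [digits, hi]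
  split_ifs with h
  · rw [← Fin.succAbove_of_castSucc_lt i j h, Fin.insertNth_apply_succAbove]
  · rw [← Fin.succAbove_of_le_castSucc i j (not_lt.1 h), Fin.insertNth_apply_succAbove]

theorem nuInf_insertNth {n : ℕ} (i : Fin (n + 1)) {ε : ℝ} (hε : |ε| = 1) {w : Fin n → ℝ}
    (hw : ‖w‖ ≤ 1) : nuInf (i.insertNth ε w : Fin (n + 1) → ℝ) = i.insertNth ε w := by
  rw [nuInf_eq_smul, norm_insertNth_real, hε, max_eq_left hw, inv_one, one_smul]

theorem mem_faceCube_iff_floor_mem {n Q : ℕ} (hQ : 0 < Q) {w : Fin n → ℝ} :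
    w ∈ faceCube n ↔ ∀ k, ⌊(Q : ℝ) * w k⌋ ∈ Set.Ico (-Q : ℤ) Q := by
  have hQ' : (0 : ℝ) < Q := Nat.cast_pos.2 hQ
  rw [faceCube, Set.mem_univ_pi]
  refine forall_congr' fun k => ?_
  rw [Set.mem_Ico, Set.mem_Ico, Int.le_floor, Int.floor_lt, ← mul_le_mul_iff_right₀ hQ',
    ← mul_lt_mul_iff_right₀ hQ']
  push_cast
  rw [mul_neg, mul_one]

theorem indicator_faceCube_le_of_floor_eq {n Q : ℕ} (hQ : 0 < Q) {f : (Fin n → ℝ) → ℝ≥0∞}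
    {C : ℝ≥0∞}
    (hC : ∀ w w' : Fin n → ℝ, (∀ k, ⌊(Q : ℝ) * w k⌋ = ⌊(Q : ℝ) * w' k⌋) → f w ≤ C * f w')
    {w w' : Fin n → ℝ} (h : ∀ k, ⌊(Q : ℝ) * w k⌋ = ⌊(Q : ℝ) * w' k⌋) :
    (faceCube n).indicator f w ≤ C * (faceCube n).indicator f w' := by
  by_cases hw : w ∈ faceCube n
  · have hw' : w' ∈ faceCube n := by
      rw [mem_faceCube_iff_floor_mem hQ] at hw ⊢
      exact fun k => h k ▸ hw k
    rw [Set.indicator_of_mem hw, Set.indicator_of_mem hw']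
    exact hC w w' h
  · rw [Set.indicator_of_notMem hw]
    exact zero_le

section Digits

variable {n Q : ℕ} {F : (Fin (n + 1) → ℝ) → (Fin n → ℝ) → ℝ≥0∞}

theorem setLIntegral_truncCube_digits_le (hQ : 0 < Q) (hF : ∀ x, Measurable (F x))
    {f : (Fin n → ℝ) → ℝ≥0∞} (hf : Measurable f) {C : ℝ≥0∞}
    (hC : ∀ w w' : Fin n → ℝ, (∀ k, ⌊(Q : ℝ) * w k⌋ = ⌊(Q : ℝ) * w' k⌋) → f w ≤ C * f w')
    (i : Fin (n + 1)) {ε : ℝ} (hε : |ε| = 1) :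
    ∫⁻ w in faceCube n, F (truncCube Q (nuInf (i.insertNth ε w)))
        (digits Q (nuInf (i.insertNth ε w))) * f w ≤
      C * ∫⁻ w in faceCube n,
        (∫⁻ y, F (truncCube Q (nuInf (i.insertNth ε w))) y ∂cubeMeasure (Fin n)) * f w := by
  let h (j : Fin n → ℤ) (y : Fin n → ℝ) : ℝ≥0∞ := F (i.insertNth ε fun k => (j k : ℝ) / Q) y
  have hface : ∀ᵐ w ∂volume.restrict (faceCube n),
      nuInf (i.insertNth ε w : Fin (n + 1) → ℝ) = i.insertNth ε w ∧
        faceIdxN (i.insertNth ε w : Fin (n + 1) → ℝ) = i := by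
    filter_upwards [ae_restrict_mem (measurableSet_faceCube n),
      ae_restrict_of_ae ae_abs_ne_one] with w hw hne
    exact ⟨nuInf_insertNth i hε ((mem_faceCube_iff_norm_le_one hne).1 hw),
      (faceIdxN_insertNth_eq_iff i hε hne).2 hw⟩
  have hindicator (φ : (Fin n → ℝ) → ℝ≥0∞) :
      ∫⁻ w in faceCube n, φ w * f w = ∫⁻ w, φ w * (faceCube n).indicator f w := by
    rw [← lintegral_indicator (measurableSet_faceCube n)]
    simp only [Set.indicator_mul_right]
  calc ∫⁻ w in faceCube n, F (truncCube Q (nuInf (i.insertNth ε w)))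
        (digits Q (nuInf (i.insertNth ε w))) * f w
      = ∫⁻ w in faceCube n,
          h (fun k => ⌊(Q : ℝ) * w k⌋) (fun k => Int.fract ((Q : ℝ) * w k)) * f w := by
        refine lintegral_congr_ae ?_
        filter_upwards [hface] with w hw
        rw [hw.1, truncCube_insertNth Q hw.2, digits_insertNth Q hw.2]
        rfl
    _ ≤ C * ∫⁻ w in faceCube n,
          (∫⁻ y, h (fun k => ⌊(Q : ℝ) * w k⌋) y ∂cubeMeasure (Fin n)) * f w := by
        rw [hindicator, hindicator]
        exact lintegral_floor_fract_mul_le (Nat.cast_ne_zero.2 hQ.ne') (h := h)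
          (fun _ => hF _) (hf.indicator (measurableSet_faceCube n)) fun _ _ hw =>
            indicator_faceCube_le_of_floor_eq hQ hC hw
    _ = _ := by
        congr 1
        refine lintegral_congr_ae ?_
        filter_upwards [hface] with w hw
        rw [hw.1, truncCube_insertNth Q hw.2]
        rfl

theorem lintegral_truncCube_digits_le (hQ : 0 < Q) (hF : Measurable (Function.uncurry F))
    {C : ℝ≥0∞} (hC : ∀ w w' : Fin n → ℝ, (∀ k, ⌊(Q : ℝ) * w k⌋ = ⌊(Q : ℝ) * w' k⌋) →
      coneDensity n w ≤ C * coneDensity n w') :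
    ∫⁻ g, F (truncCube Q (nuInf g)) (digits Q (nuInf g)) ∂stdGaussianPi (Fin (n + 1)) ≤
      C * ∫⁻ g, ∫⁻ y, F (truncCube Q (nuInf g)) y ∂cubeMeasure (Fin n)
        ∂stdGaussianPi (Fin (n + 1)) := by
  have htrunc : Measurable fun g : Fin (n + 1) → ℝ => truncCube Q (nuInf g) :=
    (measurable_truncCube Q).comp measurable_nuInf
  have hdigits : Measurable fun g : Fin (n + 1) → ℝ => digits Q (nuInf g) :=
    (measurable_digits Q).comp measurable_nuInf
  have hleft : Measurable fun g => F (truncCube Q (nuInf g)) (digits Q (nuInf g)) :=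
    hF.comp (htrunc.prodMk hdigits)
  have hright : Measurable fun g => ∫⁻ y, F (truncCube Q (nuInf g)) y ∂cubeMeasure (Fin n) :=
    hF.lintegral_prod_right'.comp htrunc
  rw [lintegral_stdGaussianPi_eq_sum_faces hleft fun c hc x => by rw [nuInf_smul hc],
    lintegral_stdGaussianPi_eq_sum_faces hright fun c hc x => by rw [nuInf_smul hc]]
  simp only [Finset.mul_sum]
  exact Finset.sum_le_sum fun i _ => Finset.sum_le_sum fun ε hε =>
    setLIntegral_truncCube_digits_le (F := F) hQ (fun _ => hF.comp measurable_prodMk_left)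
      (measurable_coneDensity n) hC i (abs_eq_one_of_mem hε)

end Digits

/-! ### Spacings of uniform points and proportions of exponential variables -/

/-- The successive differences `t₀, t₁ - t₀, t₂ - t₁, …` of a finite real sequence. -/
def diffs {m : ℕ} (t : Fin m → ℝ) : Fin m → ℝ := fun i =>
  t i - (Fin.cons 0 t : Fin (m + 1) → ℝ) i.castSucc

/-- The partial sums `s₀, s₀ + s₁, …` of a finite real sequence: the inverse of `diffs`. -/
def partialSums {m : ℕ} (s : Fin m → ℝ) : Fin m → ℝ := fun i => ∑ j ∈ Finset.Iic i, s j

/-- The lengths of the intervals into which an increasing sequence `y` divides `[0,1]`. -/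
def spacings {m : ℕ} (y : Fin m → ℝ) : Fin (m + 1) → ℝ := diffs (Fin.snoc y 1)

/-- The simplex of the sequences `0 ≤ y₀ ≤ y₁ ≤ … ≤ 1`. -/
def orderedSimplex (m : ℕ) : Set (Fin m → ℝ) := {y | Monotone y ∧ ∀ k, y k ∈ Set.Icc 0 1}

section Diffs

variable {m : ℕ}

theorem measurable_diffs : Measurable (diffs : (Fin m → ℝ) → Fin m → ℝ) := by
  refine measurable_pi_lambda _ fun i => (measurable_pi_apply i).sub ?_
  cases i.castSucc using Fin.cases with
  | zero => simp
  | succ j => simpa using measurable_pi_apply j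

theorem measurable_spacings : Measurable (spacings : (Fin m → ℝ) → Fin (m + 1) → ℝ) := by
  refine measurable_diffs.comp (measurable_pi_lambda _ fun i => ?_)
  cases i using Fin.lastCases with
  | last => simp
  | cast j => simpa using measurable_pi_apply j

theorem diffs_smul (c : ℝ) (t : Fin m → ℝ) : diffs (c • t) = c • diffs t := by
  funext i
  have hcons (j : Fin (m + 1)) :
      (Fin.cons 0 (c • t) : Fin (m + 1) → ℝ) j = c * (Fin.cons 0 t : Fin (m + 1) → ℝ) j := by
    cases j using Fin.cases <;> simp
  simp only [diffs, hcons, Pi.smul_apply, smul_eq_mul, mul_sub]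

theorem diffs_partialSums (s : Fin m → ℝ) : diffs (partialSums s) = s := by
  funext i
  obtain _ | m := m
  · exact i.elim0
  cases i using Fin.cases with
  | zero =>
    have hIic : Finset.Iic (0 : Fin (m + 1)) = {0} := by ext j; simp
    simp [diffs, partialSums, hIic]
  | succ k =>
    have hIic : Finset.Iic k.succ = insert k.succ (Finset.Iic k.castSucc) := by
      ext j
      simp only [Finset.mem_Iic, Finset.mem_insert, Fin.le_def, Fin.ext_iff, Fin.val_succ,
        Fin.val_castSucc]
      omega
    simp only [diffs, partialSums, ← Fin.succ_castSucc, Fin.cons_succ]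
    rw [hIic, Finset.sum_insert (by simp [Fin.le_def]), add_sub_cancel_right]

theorem sum_diffs (t : Fin (m + 1) → ℝ) : ∑ i, diffs t i = t (Fin.last m) := by
  have hsum := Fin.sum_univ_succ (Fin.cons 0 t : Fin (m + 2) → ℝ)
  rw [Fin.sum_univ_castSucc] at hsum
  simp only [Fin.cons_zero, Fin.cons_succ, ← Fin.succ_last, zero_add] at hsum
  simp only [diffs, Finset.sum_sub_distrib, ← hsum, add_sub_cancel_left]

theorem measurePreserving_partialSums :
    MeasurePreserving (partialSums : (Fin m → ℝ) → Fin m → ℝ) := by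
  let M : Matrix (Fin m) (Fin m) ℝ := fun i j => if j ≤ i then 1 else 0
  have hdet : M.det = 1 := by
    rw [Matrix.det_of_isLowerTriangular M fun i j hij => if_neg (not_le.2 hij)]
    simp [M]
  have hfun : (partialSums : (Fin m → ℝ) → Fin m → ℝ) = Matrix.toLin' M := by
    funext s i
    have hIic : Finset.Iic i = Finset.univ.filter (· ≤ i) := by ext j; simp
    rw [Matrix.toLin'_apply, partialSums, hIic, Finset.sum_filter]
    simp [M, Matrix.mulVec, dotProduct]
  rw [hfun]
  refine ⟨(LinearMap.continuous_of_finiteDimensional _).measurable, ?_⟩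
  rw [Real.map_matrix_volume_pi_eq_smul_volume_pi (hdet.trans_ne one_ne_zero), hdet]
  simp

theorem monotone_cons_iff {α : Type*} [Preorder α] {a : α} {t : Fin m → α} :
    Monotone (Fin.cons a t : Fin (m + 1) → α) ↔ (∀ i, a ≤ t i) ∧ Monotone t := by
  refine ⟨fun h => ⟨fun i => h (Fin.zero_le i.succ), fun i j hij => h (Fin.succ_le_succ_iff.2 hij)⟩,
    fun ⟨ha, ht⟩ i j hij => ?_⟩
  cases i using Fin.cases with
  | zero =>
    cases j using Fin.cases with
    | zero => exact le_rfl
    | succ j => exact ha j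
  | succ i =>
    cases j using Fin.cases with
    | zero => simp at hij
    | succ j => exact ht (Fin.succ_le_succ_iff.1 hij)

theorem monotone_snoc_iff {α : Type*} [Preorder α] {a : α} {t : Fin m → α} :
    Monotone (Fin.snoc t a : Fin (m + 1) → α) ↔ Monotone t ∧ ∀ i, t i ≤ a := by
  refine ⟨fun h => ⟨fun i j hij => ?_, fun i => ?_⟩, fun ⟨ht, ha⟩ i j hij => ?_⟩
  · simpa using h (Fin.castSucc_le_castSucc_iff.2 hij)
  · simpa using h (Fin.le_last i.castSucc)
  cases j using Fin.lastCases with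
  | last => cases i using Fin.lastCases <;> simp [ha]
  | cast j =>
    cases i using Fin.lastCases with
    | last => exact absurd hij (not_le.2 (Fin.castSucc_lt_last j))
    | cast i => simpa using ht (Fin.castSucc_le_castSucc_iff.1 hij)

theorem diffs_nonneg_iff {t : Fin m → ℝ} : 0 ≤ diffs t ↔ 0 ≤ t ∧ Monotone t := by
  rw [Pi.le_def, Pi.le_def, Pi.zero_def, ← monotone_cons_iff, Fin.monotone_iff_le_succ]
  simp [diffs]

theorem mem_orderedSimplex_iff_spacings_nonneg {y : Fin m → ℝ} :
    y ∈ orderedSimplex m ↔ 0 ≤ spacings y := by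
  rw [spacings, diffs_nonneg_iff, monotone_snoc_iff, Pi.le_def, Fin.forall_fin_succ']
  simp only [orderedSimplex, Set.mem_ofPred_eq, Set.mem_Icc, Fin.snoc_castSucc, Fin.snoc_last,
    Pi.zero_apply, zero_le_one, and_true, forall_and]
  tauto

theorem measurableSet_orderedSimplex : MeasurableSet (orderedSimplex m) := by
  have hset : orderedSimplex m = spacings ⁻¹' Set.Ici 0 :=
    Set.ext fun _ => mem_orderedSimplex_iff_spacings_nonneg
  rw [hset]
  exact measurable_spacings measurableSet_Ici

end Diffs

section Proportions

theorem expMeasure_one_eq_withDensity : expMeasure 1 =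
    (volume.restrict (Set.Ici 0)).withDensity fun s => ENNReal.ofReal (Real.exp (-s)) := by
  rw [← withDensity_indicator measurableSet_Ici]
  change volume.withDensity (exponentialPDF 1) = _
  congr 1
  funext s
  by_cases hs : 0 ≤ s
  · rw [exponentialPDF_of_nonneg hs, Set.indicator_of_mem (Set.mem_Ici.2 hs), one_mul, one_mul]
  · rw [exponentialPDF_of_neg (not_le.1 hs), Set.indicator_of_notMem (mt Set.mem_Ici.1 hs)]

instance : IsProbabilityMeasure (expMeasure 1) := isProbabilityMeasure_expMeasure one_pos

theorem lintegral_pi_expMeasure {ι : Type*} [Fintype ι] {g : (ι → ℝ) → ℝ≥0∞} (hg : Measurable g) :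
    ∫⁻ s, g s ∂(Measure.pi fun _ : ι => expMeasure 1) =
      ∫⁻ s in Set.Ici 0, ENNReal.ofReal (Real.exp (-∑ i, s i)) * g s := by
  have : SigmaFinite ((volume.restrict (Set.Ici 0)).withDensity
      fun s => ENNReal.ofReal (Real.exp (-s))) := by
    rw [← expMeasure_one_eq_withDensity]
    infer_instance
  rw [expMeasure_one_eq_withDensity, pi_withDensity _ fun _ => by fun_prop,
    ← Measure.restrict_pi_pi, ← volume_pi,
    lintegral_withDensity_eq_lintegral_mul _ (by fun_prop) hg, ← Set.pi_univ_Ici]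
  refine lintegral_congr fun s => ?_
  rw [Pi.mul_apply, ← Finset.sum_neg_distrib, Real.exp_sum,
    ENNReal.ofReal_prod_of_nonneg fun i _ => (Real.exp_pos _).le]

theorem setLIntegral_Ici_eq_setLIntegral_diffs {m : ℕ} {g : (Fin m → ℝ) → ℝ≥0∞}
    (hg : Measurable g) :
    ∫⁻ s in Set.Ici 0, g s = ∫⁻ t in diffs ⁻¹' Set.Ici 0, g (diffs t) := by
  have hset : MeasurableSet (diffs ⁻¹' Set.Ici (0 : Fin m → ℝ)) :=
    measurable_diffs measurableSet_Ici
  rw [← measurePreserving_partialSums.setLIntegral_comp_preimage (f := fun t => g (diffs t)) hset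
    (hg.comp measurable_diffs), ← Set.preimage_comp]
  simp only [Function.comp_def, diffs_partialSums, Set.preimage_id']

theorem lintegral_pow_mul_exp_neg (m : ℕ) :
    ∫⁻ r in Set.Ioi (0 : ℝ), ENNReal.ofReal (r ^ m) * ENNReal.ofReal (Real.exp (-r)) =
      m.factorial := by
  have hrpow : ∀ r ∈ Set.Ioi (0 : ℝ), ENNReal.ofReal (r ^ m) * ENNReal.ofReal (Real.exp (-r)) =
      ENNReal.ofReal (Real.exp (-r) * r ^ ((m + 1 : ℝ) - 1)) := fun r _ => by
    rw [add_sub_cancel_right, Real.rpow_natCast, mul_comm, ENNReal.ofReal_mul (Real.exp_pos _).le]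
  rw [setLIntegral_congr_fun measurableSet_Ioi hrpow, ← ofReal_integral_eq_lintegral_ofReal
      (Real.GammaIntegral_convergent (by positivity)), ← Real.Gamma_eq_integral (by positivity),
    Real.Gamma_nat_eq_factorial, ENNReal.ofReal_natCast]
  filter_upwards [ae_restrict_mem measurableSet_Ioi] with r (hr : 0 < r)
  positivity

theorem smul_snoc_mem_preimage_diffs_Ici {m : ℕ} {r : ℝ} (hr : 0 < r) {y : Fin m → ℝ} :
    r • (Fin.snoc y 1 : Fin (m + 1) → ℝ) ∈ diffs ⁻¹' Set.Ici 0 ↔ y ∈ orderedSimplex m := by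
  rw [mem_orderedSimplex_iff_spacings_nonneg, Set.mem_preimage, diffs_smul, Set.mem_Ici,
    smul_nonneg_iff_nonneg_of_pos_left hr, spacings]

theorem smul_snoc_notMem_preimage_diffs_Ici {m : ℕ} {r : ℝ} (hr : 0 < r) {y : Fin m → ℝ} :
    r • (Fin.snoc y (-1) : Fin (m + 1) → ℝ) ∉ diffs ⁻¹' Set.Ici 0 := fun h => by
  have hlast := (diffs_nonneg_iff.1 h).1 (Fin.last m)
  simp only [Pi.zero_apply, Pi.smul_apply, Fin.snoc_last, smul_eq_mul] at hlast
  linarith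

theorem setLIntegral_diffs_eq_setLIntegral_orderedSimplex {m : ℕ}
    {g : (Fin (m + 1) → ℝ) → ℝ≥0∞} (hg : Measurable g) :
    ∫⁻ t in diffs ⁻¹' Set.Ici 0, g t = ∫⁻ y in orderedSimplex m, ∫⁻ r in Set.Ioi (0 : ℝ),
      ENNReal.ofReal (r ^ m) * g (r • (Fin.snoc y 1 : Fin (m + 1) → ℝ)) := by
  have hset : MeasurableSet (diffs ⁻¹' Set.Ici (0 : Fin (m + 1) → ℝ)) :=
    measurable_diffs measurableSet_Ici
  have hneg (y : Fin m → ℝ) : ∫⁻ r in Set.Ioi (0 : ℝ), ENNReal.ofReal (r ^ m) *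
      (diffs ⁻¹' Set.Ici 0).indicator g (r • Fin.snoc y (-1)) = 0 :=
    setLIntegral_eq_zero measurableSet_Ioi fun r hr => by
      simp only [Set.indicator_of_notMem (smul_snoc_notMem_preimage_diffs_Ici hr), mul_zero,
        Pi.zero_apply]
  rw [← lintegral_indicator hset, ← lintegral_indicator measurableSet_orderedSimplex,
    lintegral_eq_sum_lintegral_rays (Fin.last m) (hg.indicator hset),
    Finset.sum_pair (by norm_num)]
  simp only [Fin.insertNth_last', hneg, lintegral_zero, add_zero]
  refine lintegral_congr fun y => ?_
  by_cases hy : y ∈ orderedSimplex m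
  · rw [Set.indicator_of_mem hy]
    refine setLIntegral_congr_fun measurableSet_Ioi fun r hr => ?_
    simp only [Set.indicator_of_mem ((smul_snoc_mem_preimage_diffs_Ici hr).2 hy)]
  · rw [Set.indicator_of_notMem hy]
    refine setLIntegral_eq_zero measurableSet_Ioi fun r hr => ?_
    simp only [Set.indicator_of_notMem (mt (smul_snoc_mem_preimage_diffs_Ici hr).1 hy), mul_zero,
      Pi.zero_apply]

-- In the coordinates `t = r • (y, 1)` of the partial sums, the exponential density is a function
-- of the total `r` alone.
theorem lintegral_proportions_expMeasure {m : ℕ} {K : (Fin (m + 1) → ℝ) → ℝ≥0∞}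
    (hK : Measurable K) :
    ∫⁻ s, K ((∑ i, s i)⁻¹ • s) ∂(Measure.pi fun _ : Fin (m + 1) => expMeasure 1) =
      m.factorial * ∫⁻ y in orderedSimplex m, K (spacings y) := by
  have hdiffs := measurable_diffs (m := m + 1)
  have hfac : (m.factorial : ℝ≥0∞) ≠ ∞ := ENNReal.natCast_ne_top _
  rw [lintegral_pi_expMeasure (by fun_prop), setLIntegral_Ici_eq_setLIntegral_diffs (by fun_prop),
    setLIntegral_diffs_eq_setLIntegral_orderedSimplex (by fun_prop),
    ← lintegral_const_mul' _ _ hfac]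
  simp only [sum_diffs]
  refine lintegral_congr fun y => ?_
  rw [← lintegral_pow_mul_exp_neg, ← lintegral_mul_const _ (by fun_prop)]
  refine setLIntegral_congr_fun measurableSet_Ioi fun r (hr : 0 < r) => ?_
  simp only [diffs_smul, Pi.smul_apply, Fin.snoc_last, smul_eq_mul, mul_one,
    inv_smul_smul₀ hr.ne', spacings, mul_assoc]

end Proportions

section OrderStatistics

variable {m : ℕ}

/-- The increasing rearrangement of a finite real sequence. -/
def sorted (y : Fin m → ℝ) : Fin m → ℝ := fun k => y (Tuple.sort y k)

theorem measurableSet_sort_eq (σ : Equiv.Perm (Fin m)) :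
    MeasurableSet {y : Fin m → ℝ | Tuple.sort y = σ} := by
  simp only [eq_comm (b := σ), Tuple.eq_sort_iff, Monotone, Function.comp_apply]
  measurability

theorem measurable_sorted : Measurable (sorted : (Fin m → ℝ) → Fin m → ℝ) := by
  refine measurable_pi_lambda _ fun k => ?_
  let _ : MeasurableSpace (Equiv.Perm (Fin m)) := ⊤
  have _ : MeasurableSingletonClass (Equiv.Perm (Fin m)) := ⟨fun _ => trivial⟩
  have hsort : Measurable fun y : Fin m → ℝ => Tuple.sort y :=
    measurable_to_countable' measurableSet_sort_eq
  have heval : Measurable fun p : (Fin m → ℝ) × Equiv.Perm (Fin m) => p.1 (p.2 k) :=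
    measurable_from_prod_countable_left fun σ => measurable_pi_apply (σ k)
  exact heval.comp (measurable_id.prodMk hsort)

theorem ae_injective {ι : Type*} [Fintype ι] : ∀ᵐ y : ι → ℝ, Function.Injective y := by
  classical
  have hne (i j : ι) (hij : i ≠ j) : ∀ᵐ y : ι → ℝ, y i ≠ y j := by
    let S : Submodule ℝ (ι → ℝ) :=
      LinearMap.ker (LinearMap.proj (R := ℝ) (φ := fun _ : ι => ℝ) i - LinearMap.proj j)
    have hS : S ≠ ⊤ := fun h => by
      have hmem : (Pi.single i 1 : ι → ℝ) ∈ S := h ▸ Submodule.mem_top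
      simp [S, LinearMap.mem_ker, hij.symm] at hmem
    refine measure_mono_null (fun y hy => ?_) (Measure.addHaar_submodule volume S hS)
    have : y i = y j := by simpa using hy
    simp [S, LinearMap.mem_ker, this]
  have hall : ∀ᵐ y : ι → ℝ, ∀ i j : ι, i ≠ j → y i ≠ y j := by
    simp only [ae_all_iff]
    exact hne
  filter_upwards [hall] with y hy i j hij
  exact not_imp_not.1 (hy i j) hij

theorem sort_comp_symm_eq_iff_monotone {z : Fin m → ℝ} (hz : Function.Injective z)
    (σ : Equiv.Perm (Fin m)) : Tuple.sort (z ∘ σ.symm) = σ ↔ Monotone z := by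
  rw [eq_comm, Tuple.eq_sort_iff]
  simp only [Function.comp_assoc, Function.comp_apply, Equiv.symm_comp_self, Function.comp_id,
    Equiv.symm_apply_apply, and_iff_left_iff_imp]
  exact fun _ i j hij h => absurd (hz h) hij.ne

theorem mem_orderedSimplex_iff {z : Fin m → ℝ} (hz : Function.Injective z) (hz1 : ∀ k, z k ≠ 1)
    (σ : Equiv.Perm (Fin m)) : z ∈ orderedSimplex m ↔
      z ∘ σ.symm ∈ {y | Tuple.sort y = σ} ∩ Set.univ.pi fun _ => Set.Ico 0 1 := by
  rw [Set.mem_inter_iff, Set.mem_ofPred_eq, sort_comp_symm_eq_iff_monotone hz, Set.mem_univ_pi,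
    σ.symm.forall_congr_left]
  simp only [orderedSimplex, Set.mem_ofPred_eq, Set.mem_Icc, Set.mem_Ico, lt_iff_le_and_ne,
    Function.comp_apply]
  simp [hz1]

theorem setLIntegral_sort_eq (σ : Equiv.Perm (Fin m)) (f : (Fin m → ℝ) → ℝ≥0∞) :
    ∫⁻ y in {y | Tuple.sort y = σ}, f (sorted y) ∂cubeMeasure (Fin m) =
      ∫⁻ y in orderedSimplex m, f y := by
  let S : Set (Fin m → ℝ) := {y | Tuple.sort y = σ} ∩ Set.univ.pi fun _ => Set.Ico 0 1
  have hS : MeasurableSet S :=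
    (measurableSet_sort_eq σ).inter (MeasurableSet.univ_pi fun _ => measurableSet_Ico)
  let permute : (Fin m → ℝ) ≃ᵐ (Fin m → ℝ) := MeasurableEquiv.arrowCongr' σ (.refl ℝ)
  have hpermute : MeasurePreserving permute := volume_preserving_arrowCongr' σ (.refl ℝ) (.id _)
  have hae : permute ⁻¹' S =ᵐ[volume] orderedSimplex m := by
    filter_upwards [ae_injective, ae_abs_ne_one] with z hz hz1
    exact propext (mem_orderedSimplex_iff hz (fun k hk => hz1 k (by rw [hk, abs_one])) σ).symm
  calc ∫⁻ y in {y | Tuple.sort y = σ}, f (sorted y) ∂cubeMeasure (Fin m)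
      = ∫⁻ y in S, f (y ∘ σ) := by
        rw [cubeMeasure_eq_restrict, Measure.restrict_restrict (measurableSet_sort_eq σ)]
        refine setLIntegral_congr_fun hS fun y hy => ?_
        have hσ : Tuple.sort y = σ := hy.1
        rw [← hσ]
        rfl
    _ = ∫⁻ z in permute ⁻¹' S, f (permute z ∘ σ) :=
        (hpermute.setLIntegral_comp_preimage_emb permute.measurableEmbedding _ S).symm
    _ = ∫⁻ z in orderedSimplex m, f z := by
        rw [setLIntegral_congr hae]
        refine lintegral_congr fun z => congrArg f (funext fun k => ?_)
        exact congrArg z (σ.symm_apply_apply k)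

-- Each of the `m!` orderings of the points contributes the same integral.
theorem lintegral_sorted_cubeMeasure (f : (Fin m → ℝ) → ℝ≥0∞) :
    ∫⁻ y, f (sorted y) ∂cubeMeasure (Fin m) = m.factorial * ∫⁻ y in orderedSimplex m, f y := by
  let A (σ : Equiv.Perm (Fin m)) : Set (Fin m → ℝ) := {y | Tuple.sort y = σ}
  have iUnion_A : ⋃ σ, A σ = Set.univ := Set.eq_univ_of_forall fun y => Set.mem_iUnion.2 ⟨_, rfl⟩
  have disjoint_A : Pairwise (Function.onFun Disjoint A) := fun σ τ hne =>
    Set.disjoint_left.2 fun y hσ hτ => hne (Eq.trans (Eq.symm hσ) hτ)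
  rw [← setLIntegral_univ, ← iUnion_A, lintegral_iUnion measurableSet_sort_eq disjoint_A,
    tsum_fintype]
  simp only [setLIntegral_sort_eq, Finset.sum_const, Finset.card_univ, Fintype.card_perm,
    Fintype.card_fin, nsmul_eq_mul]

theorem lintegral_proportions_eq_lintegral_spacings {K : (Fin (m + 1) → ℝ) → ℝ≥0∞}
    (hK : Measurable K) :
    ∫⁻ s, K ((∑ i, s i)⁻¹ • s) ∂(Measure.pi fun _ : Fin (m + 1) => expMeasure 1) =
      ∫⁻ y, K (spacings (sorted y)) ∂cubeMeasure (Fin m) := by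
  rw [lintegral_proportions_expMeasure hK, lintegral_sorted_cubeMeasure fun y => K (spacings y)]

end OrderStatistics

/-! ### The Box–Muller map -/

section BoxMuller

theorem lintegral_expMeasure_one {g : ℝ → ℝ≥0∞} (hg : Measurable g) :
    ∫⁻ s, g s ∂expMeasure 1 = ∫⁻ r in Set.Ioi (0 : ℝ),
      ENNReal.ofReal r * (ENNReal.ofReal (Real.exp (-(r ^ 2 / 2))) * g (r ^ 2 / 2)) := by
  have himage : (fun r : ℝ => r ^ 2 / 2) '' Set.Ioi 0 = Set.Ioi 0 := by
    refine Set.Subset.antisymm ?_ fun s (hs : 0 < s) => ⟨Real.sqrt (2 * s), ?_, ?_⟩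
    · rintro _ ⟨r, hr : 0 < r, rfl⟩
      exact Set.mem_Ioi.2 (by positivity)
    · exact Real.sqrt_pos.2 (by positivity)
    · simp only [Real.sq_sqrt (by positivity : 0 ≤ 2 * s)]
      ring
  have hinj : Set.InjOn (fun r : ℝ => r ^ 2 / 2) (Set.Ioi 0) :=
    fun r (hr : 0 < r) s (hs : 0 < s) h =>
      (pow_left_inj₀ hr.le hs.le two_ne_zero).1 ((div_left_inj' two_ne_zero).1 h)
  have hderiv : ∀ r ∈ Set.Ioi (0 : ℝ),
      HasDerivWithinAt (fun r : ℝ => r ^ 2 / 2) r (Set.Ioi 0) r := fun r _ => by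
    have h := ((hasDerivAt_pow 2 r).div_const 2).hasDerivWithinAt (s := Set.Ioi 0)
    simpa using h
  have hsubst := lintegral_image_eq_lintegral_abs_deriv_mul measurableSet_Ioi hderiv hinj
    fun s => ENNReal.ofReal (Real.exp (-s)) * g s
  rw [expMeasure_one_eq_withDensity, lintegral_withDensity_eq_lintegral_mul _ (by fun_prop) hg,
    setLIntegral_congr Ioi_ae_eq_Ici.symm]
  refine (himage ▸ hsubst).trans ?_
  refine setLIntegral_congr_fun measurableSet_Ioi fun r (hr : 0 < r) => ?_
  simp only [abs_of_pos hr]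

theorem setLIntegral_Ico_zero_one {a b : ℝ} (hab : a < b) (g : ℝ → ℝ≥0∞) :
    ∫⁻ t in Set.Ico (0 : ℝ) 1, g t =
      ENNReal.ofReal (b - a)⁻¹ * ∫⁻ x in Set.Ioo a b, g ((x - a) / (b - a)) := by
  have hpos : 0 < b - a := sub_pos.2 hab
  have himage : (fun t => a + (b - a) * t) '' Set.Ioo 0 1 = Set.Ioo a b := by
    rw [← Set.image_image (a + ·), Set.image_mul_left_Ioo hpos]
    simp
  have hinj : Set.InjOn (fun t => a + (b - a) * t) (Set.Ioo 0 1) := fun s _ t _ h =>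
    mul_left_cancel₀ hpos.ne' (add_left_cancel h)
  have hderiv : ∀ t ∈ Set.Ioo (0 : ℝ) 1,
      HasDerivWithinAt (fun t => a + (b - a) * t) (b - a) (Set.Ioo 0 1) t := fun t _ => by
    simpa using (((hasDerivAt_id t).const_mul (b - a)).const_add a).hasDerivWithinAt
  rw [← himage, lintegral_image_eq_lintegral_abs_deriv_mul measurableSet_Ioo hderiv hinj,
    ← lintegral_const_mul' _ _ ENNReal.ofReal_ne_top, setLIntegral_congr Ioo_ae_eq_Ico.symm]
  refine lintegral_congr fun t => ?_
  rw [add_sub_cancel_left, mul_div_cancel_left₀ _ hpos.ne', ← mul_assoc,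
    ← ENNReal.ofReal_mul (by positivity), abs_of_pos hpos, inv_mul_cancel₀ hpos.ne',
    ENNReal.ofReal_one, one_mul]

theorem gaussianPDF_polar (r a : ℝ) :
    gaussianPDF 0 1 (r * Real.cos a) * gaussianPDF 0 1 (r * Real.sin a) =
      ENNReal.ofReal (2 * Real.pi)⁻¹ * ENNReal.ofReal (Real.exp (-(r ^ 2 / 2))) := by
  rw [gaussianPDF, gaussianPDF, ← ENNReal.ofReal_mul (gaussianPDFReal_nonneg _ _ _),
    ← ENNReal.ofReal_mul (by positivity)]
  simp only [gaussianPDFReal, NNReal.coe_one, mul_one, sub_zero]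
  rw [mul_mul_mul_comm, ← Real.exp_add, ← mul_inv, Real.mul_self_sqrt (by positivity)]
  congr 3
  linear_combination -(r ^ 2) / 2 * Real.sin_sq_add_cos_sq a

-- The sign makes the angle `a + π ∈ (0, 2π)` match the one of `boxMuller`.
theorem lintegral_gaussianReal_prod_polar {f : ℝ × ℝ → ℝ≥0∞} (hf : Measurable f) :
    ∫⁻ p, f p ∂((gaussianReal 0 1).prod (gaussianReal 0 1)) =
      ∫⁻ r in Set.Ioi (0 : ℝ), ENNReal.ofReal r * (ENNReal.ofReal (Real.exp (-(r ^ 2 / 2))) *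
        (ENNReal.ofReal (2 * Real.pi)⁻¹ *
          ∫⁻ a in Set.Ioo (-Real.pi) Real.pi, f (-(r * Real.cos a, r * Real.sin a)))) := by
  have hpdf := measurable_gaussianPDF 0 1
  have hneg (x : ℝ) : gaussianPDF 0 1 (-x) = gaussianPDF 0 1 x := by
    simp [gaussianPDF, gaussianPDFReal]
  rw [gaussianReal_of_var_ne_zero 0 one_ne_zero, prod_withDensity hpdf hpdf,
    lintegral_withDensity_eq_lintegral_mul _ (by fun_prop) hf, ← Measure.volume_eq_prod,
    ← lintegral_neg_eq_self, ← lintegral_comp_polarCoord_symm, polarCoord_target,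
    Measure.volume_eq_prod]
  simp only [polarCoord_symm_apply, smul_eq_mul, Pi.mul_apply, Prod.fst_neg, Prod.snd_neg, hneg,
    gaussianPDF_polar]
  rw [setLIntegral_prod _ (by fun_prop)]
  refine setLIntegral_congr_fun measurableSet_Ioi fun r _ => ?_
  simp only
  rw [lintegral_const_mul _ (by fun_prop), lintegral_const_mul _ (by fun_prop)]
  ring

/-- The Box–Muller map, with `p.1` the radial and `p.2` the angular variable. -/
def boxMuller (p : ℝ × ℝ) : ℝ × ℝ :=
  (Real.sqrt (2 * p.1) * Real.cos (2 * Real.pi * p.2),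
    Real.sqrt (2 * p.1) * Real.sin (2 * Real.pi * p.2))

theorem measurable_boxMuller : Measurable boxMuller := by
  unfold boxMuller
  fun_prop

theorem boxMuller_polar {r : ℝ} (hr : 0 ≤ r) (a : ℝ) :
    boxMuller (r ^ 2 / 2, (a - -Real.pi) / (Real.pi - -Real.pi)) =
      -(r * Real.cos a, r * Real.sin a) := by
  have hangle : 2 * Real.pi * ((a - -Real.pi) / (Real.pi - -Real.pi)) = a + Real.pi := by
    have := Real.pi_ne_zero
    field_simp
    ring
  have hradius : Real.sqrt (2 * (r ^ 2 / 2)) = r := by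
    rw [mul_div_cancel₀ _ two_ne_zero, Real.sqrt_sq hr]
  rw [boxMuller, hangle, hradius, Real.cos_add_pi, Real.sin_add_pi, mul_neg, mul_neg, Prod.neg_mk]

theorem measurePreserving_boxMuller :
    MeasurePreserving boxMuller ((expMeasure 1).prod (volume.restrict (Set.Ico (0 : ℝ) 1)))
      ((gaussianReal 0 1).prod (gaussianReal 0 1)) := by
  refine ⟨measurable_boxMuller, Measure.ext_of_lintegral _ fun f hf => ?_⟩
  have hfB : Measurable fun p => f (boxMuller p) := hf.comp measurable_boxMuller
  rw [lintegral_map hf measurable_boxMuller, lintegral_prod _ hfB.aemeasurable,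
    lintegral_expMeasure_one hfB.lintegral_prod_right', lintegral_gaussianReal_prod_polar hf]
  refine setLIntegral_congr_fun measurableSet_Ioi fun r (hr : 0 < r) => ?_
  simp only [setLIntegral_Ico_zero_one (neg_lt_self Real.pi_pos), boxMuller_polar hr.le]
  rw [sub_neg_eq_add, ← two_mul]

end BoxMuller

/-! ### Sibuya's map -/

theorem measurable_toSphere {m : ℕ} : Measurable (toSphere : (Fin m → ℝ) → Fin m → ℝ) := by
  unfold toSphere
  fun_prop

theorem measurePreserving_comp_sumEquiv {ι κ τ α : Type*} [Fintype ι] [Fintype κ] [Fintype τ]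
    [MeasurableSpace α] (μ : Measure α) [SigmaFinite μ] (e : ι ⊕ κ ≃ τ) :
    MeasurePreserving (fun x : τ → α => (fun i => x (e (.inl i)), fun k => x (e (.inr k))))
      (Measure.pi fun _ => μ) ((Measure.pi fun _ => μ).prod (Measure.pi fun _ => μ)) :=
  (measurePreserving_sumPiEquivProdPi fun _ => μ).comp
    (measurePreserving_piCongrLeft (fun _ => μ) e).symm

/-- The index `2i + b` of coordinate `b` of the `i`-th coordinate plane of `ℝ^(2N)`. -/
def planeEquiv (N : ℕ) : Fin N × Fin 2 ≃ Fin (2 * N) :=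
  finProdFinEquiv.trans (finCongr (Nat.mul_comm N 2))

/-- The point of `α^(2N)` whose coordinates in the `i`-th coordinate plane are `z i`. -/
def ofPlanes {N : ℕ} {α : Type*} (z : Fin N → α × α) : Fin (2 * N) → α := fun j =>
  let p := (planeEquiv N).symm j
  ![(z p.1).1, (z p.1).2] p.2

/-- The point of `ℝ^(2N)` with polar coordinates `(√s_i, 2π t_i)` in the `i`-th coordinate
plane. -/
def polarPoint {N : ℕ} (s t : Fin N → ℝ) : Fin (2 * N) → ℝ :=
  ofPlanes fun i => (Real.sqrt (s i) * Real.cos (2 * Real.pi * t i),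
    Real.sqrt (s i) * Real.sin (2 * Real.pi * t i))

section PolarPoint

variable {N : ℕ}

@[simp]
theorem val_planeEquiv (i : Fin N) (b : Fin 2) : (planeEquiv N (i, b)).val = b + 2 * i := rfl

@[simp]
theorem ofPlanes_planeEquiv {α : Type*} (z : Fin N → α × α) (i : Fin N) (b : Fin 2) :
    ofPlanes z (planeEquiv N (i, b)) = ![(z i).1, (z i).2] b := by
  simp [ofPlanes]

theorem forall_planeEquiv {P : Fin (2 * N) → Prop} :
    (∀ j, P j) ↔ ∀ i, P (planeEquiv N (i, 0)) ∧ P (planeEquiv N (i, 1)) := by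
  simp only [← (planeEquiv N).forall_congr_right, Prod.forall, Fin.forall_fin_two]

theorem measurable_ofPlanes {α : Type*} [MeasurableSpace α] :
    Measurable (ofPlanes : (Fin N → α × α) → Fin (2 * N) → α) := by
  rw [measurable_pi_iff, forall_planeEquiv]
  simp only [ofPlanes_planeEquiv]
  exact fun i => ⟨(measurable_pi_apply i).fst, (measurable_pi_apply i).snd⟩

theorem measurePreserving_ofPlanes {α : Type*} [MeasurableSpace α] (μ : Measure α)
    [SigmaFinite μ] :
    MeasurePreserving (ofPlanes (N := N)) (Measure.pi fun _ => μ.prod μ)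
      (Measure.pi fun _ => μ) := by
  refine ⟨measurable_ofPlanes, (Measure.pi_eq fun s hs => ?_).symm⟩
  have hpre : ofPlanes ⁻¹' (Set.univ.pi s) = Set.univ.pi fun i : Fin N =>
      s (planeEquiv N (i, 0)) ×ˢ s (planeEquiv N (i, 1)) := by
    ext z
    simp [forall_planeEquiv (N := N)]
  rw [Measure.map_apply measurable_ofPlanes (MeasurableSet.univ_pi hs), hpre, Measure.pi_pi,
    ← (planeEquiv N).prod_comp, Fintype.prod_prod_type]
  simp only [Measure.prod_prod, Fin.prod_univ_two]

@[fun_prop]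
theorem measurable_polarPoint {α : Type*} [MeasurableSpace α] {s t : α → Fin N → ℝ}
    (hs : Measurable s) (ht : Measurable t) : Measurable fun a => polarPoint (s a) (t a) :=
  measurable_ofPlanes.comp (by fun_prop)

theorem sum_sq_polarPoint {s : Fin N → ℝ} (hs : ∀ i, 0 ≤ s i) (t : Fin N → ℝ) :
    ∑ j, polarPoint s t j ^ 2 = ∑ i, s i := by
  rw [← (planeEquiv N).sum_comp, Fintype.sum_prod_type]
  refine Finset.sum_congr rfl fun i _ => ?_
  rw [Fin.sum_univ_two, polarPoint, ofPlanes_planeEquiv, ofPlanes_planeEquiv]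
  simp only [Matrix.cons_val_zero, Matrix.cons_val_one, mul_pow]
  rw [← mul_add, Real.cos_sq_add_sin_sq, mul_one, Real.sq_sqrt (hs i)]

theorem polarPoint_smul {c : ℝ} (hc : 0 ≤ c) (s t : Fin N → ℝ) :
    polarPoint (c • s) t = Real.sqrt c • polarPoint s t := by
  refine funext (forall_planeEquiv.2 fun i => ?_)
  simp [polarPoint, Real.sqrt_mul hc, mul_assoc]

theorem toSphere_polarPoint {s : Fin N → ℝ} (hs : ∀ i, 0 ≤ s i) (t : Fin N → ℝ) :
    toSphere (polarPoint s t) = polarPoint ((∑ i, s i)⁻¹ • s) t := by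
  rw [toSphere, sum_sq_polarPoint hs,
    polarPoint_smul (inv_nonneg.2 (Finset.sum_nonneg fun i _ => hs i)), Real.sqrt_inv]

theorem measurePreserving_polarPoint :
    MeasurePreserving (fun p : (Fin N → ℝ) × (Fin N → ℝ) => polarPoint ((2 : ℝ) • p.1) p.2)
      ((Measure.pi fun _ => expMeasure 1).prod (cubeMeasure (Fin N)))
      (stdGaussianPi (Fin (2 * N))) :=
  (measurePreserving_ofPlanes (gaussianReal 0 1)).comp <|
    (measurePreserving_pi _ _ fun _ => measurePreserving_boxMuller).comp
      (measurePreserving_arrowProdEquivProdArrow ℝ ℝ (Fin N) (fun _ => expMeasure 1)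
        fun _ => volume.restrict (Set.Ico (0 : ℝ) 1)).symm

end PolarPoint

theorem ae_pi_expMeasure_nonneg {ι : Type*} [Fintype ι] :
    ∀ᵐ s ∂(Measure.pi fun _ : ι => expMeasure 1), ∀ i, 0 ≤ s i := by
  have h : ∀ᵐ s ∂expMeasure 1, 0 ≤ s := by
    rw [expMeasure_one_eq_withDensity]
    exact (withDensity_absolutelyContinuous _ _).ae_le (ae_restrict_mem measurableSet_Ici)
  exact ae_all_iff.2 fun i => (Measure.quasiMeasurePreserving_eval _ i).ae h

section Sibuya

variable {m : ℕ}

/-- The splitting of the arguments of Sibuya's map for `N = m + 1` into `m + 1` angles and `m`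
points of `[0,1)`. -/
def sibuyaEquiv (m : ℕ) : Fin (m + 1) ⊕ Fin m ≃ Fin (2 * (m + 1) - 1) :=
  finSumFinEquiv.trans (finCongr (by omega))

theorem sibuyaYs_eq (x : Fin (2 * (m + 1) - 1) → ℝ) (k : Fin (m + 2)) :
    sibuyaYs (m + 1) x k = (Fin.cons 0 (Fin.snoc (sorted fun i => x (sibuyaEquiv m (.inr i))) 1 :
      Fin (m + 1) → ℝ) : Fin (m + 2) → ℝ) k := by
  have htail : (fun i : Fin (m + 1 - 1) =>
      if h : (m + 1) + i.val < 2 * (m + 1) - 1 then x ⟨(m + 1) + i.val, h⟩ else 0) =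
      fun i : Fin m => x (sibuyaEquiv m (.inr i)) := by
    funext i
    have hi : i.val < m := i.2
    exact dif_pos (by omega)
  unfold sibuyaYs
  rw [htail]
  cases k using Fin.cases with
  | zero => simp
  | succ k =>
    rw [if_neg (by simp), Fin.cons_succ]
    cases k using Fin.lastCases with
    | last => rw [if_pos (by simp), Fin.snoc_last]
    | cast k =>
      rw [if_neg (by simp), Fin.snoc_castSucc, dif_pos (by simp)]
      rfl

theorem sibuya_eq_polarPoint (x : Fin (2 * (m + 1) - 1) → ℝ) :
    sibuya (m + 1) x = polarPoint (spacings (sorted fun k => x (sibuyaEquiv m (.inr k))))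
      (fun i => x (sibuyaEquiv m (.inl i))) := by
  have hcoord (i : Fin (m + 1)) (b : Fin 2) : sibuya (m + 1) x (planeEquiv (m + 1) (i, b)) =
      Real.sqrt (spacings (sorted fun k => x (sibuyaEquiv m (.inr k))) i) *
        if b.val = 0 then Real.cos (2 * Real.pi * x (sibuyaEquiv m (.inl i)))
        else Real.sin (2 * Real.pi * x (sibuyaEquiv m (.inl i))) := by
    have hdiv : (planeEquiv (m + 1) (i, b)).val / 2 = i.val := by rw [val_planeEquiv]; omega
    have hmod : (planeEquiv (m + 1) (i, b)).val % 2 = b.val := by rw [val_planeEquiv]; omega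
    have hsucc := sibuyaYs_eq x i.succ
    have hcast := sibuyaYs_eq x i.castSucc
    rw [Fin.cons_succ, Fin.val_succ] at hsucc
    rw [Fin.val_castSucc] at hcast
    simp only [sibuya, hdiv, hmod, hsucc, hcast]
    rw [dif_pos (by omega)]
    rfl
  refine funext (forall_planeEquiv.2 fun i => ?_)
  simp [hcoord, polarPoint]

theorem measurable_sibuya : Measurable (sibuya (m + 1)) := by
  have hsorted := measurable_sorted (m := m)
  have hspacings := measurable_spacings (m := m)
  rw [funext sibuya_eq_polarPoint]
  fun_prop

theorem lintegral_comp_sibuya_eq {F : (Fin (2 * (m + 1)) → ℝ) → ℝ≥0∞} (hF : Measurable F) :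
    ∫⁻ x, F (sibuya (m + 1) x) ∂cubeMeasure (Fin (2 * (m + 1) - 1)) =
      ∫⁻ t, ∫⁻ y, F (polarPoint (spacings (sorted y)) t)
        ∂cubeMeasure (Fin m) ∂cubeMeasure (Fin (m + 1)) := by
  have hsorted := measurable_sorted (m := m)
  have hspacings := measurable_spacings (m := m)
  have hFp : Measurable fun p : (Fin (m + 1) → ℝ) × (Fin m → ℝ) =>
      F (polarPoint (spacings (sorted p.2)) p.1) := by
    fun_prop
  simp only [sibuya_eq_polarPoint]
  rw [← lintegral_prod _ hFp.aemeasurable]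
  exact (measurePreserving_comp_sumEquiv _ (sibuyaEquiv m)).lintegral_comp hFp

theorem lintegral_comp_toSphere_eq {N : ℕ} {F : (Fin (2 * N) → ℝ) → ℝ≥0∞} (hF : Measurable F) :
    ∫⁻ g, F (toSphere g) ∂stdGaussianPi (Fin (2 * N)) =
      ∫⁻ t, ∫⁻ s, F (polarPoint ((∑ i, s i)⁻¹ • s) t)
        ∂(Measure.pi fun _ => expMeasure 1) ∂cubeMeasure (Fin N) := by
  have hFt : Measurable fun g => F (toSphere g) := hF.comp measurable_toSphere
  have hFp : Measurable fun p : (Fin N → ℝ) × (Fin N → ℝ) =>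
      F (toSphere (polarPoint ((2 : ℝ) • p.1) p.2)) :=
    hFt.comp measurePreserving_polarPoint.measurable
  rw [← measurePreserving_polarPoint.lintegral_comp hFt, lintegral_prod_symm' _ hFp]
  refine lintegral_congr fun t => lintegral_congr_ae ?_
  filter_upwards [ae_pi_expMeasure_nonneg] with s hs
  have hscale : (∑ i, ((2 : ℝ) • s) i)⁻¹ • (2 : ℝ) • s = (∑ i, s i)⁻¹ • s := by
    simp only [Pi.smul_apply, smul_eq_mul, ← Finset.mul_sum, mul_inv, smul_smul]
    rw [mul_right_comm, inv_mul_cancel₀ two_ne_zero, one_mul]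
  rw [toSphere_polarPoint (s := (2 : ℝ) • s) fun i => mul_nonneg zero_le_two (hs i), hscale]

theorem lintegral_sibuya {F : (Fin (2 * (m + 1)) → ℝ) → ℝ≥0∞} (hF : Measurable F) :
    ∫⁻ x, F (sibuya (m + 1) x) ∂cubeMeasure (Fin (2 * (m + 1) - 1)) =
      ∫⁻ g, F (toSphere g) ∂stdGaussianPi (Fin (2 * (m + 1))) := by
  have hFp (t) : Measurable fun s => F (polarPoint s t) := by fun_prop
  rw [lintegral_comp_sibuya_eq hF, lintegral_comp_toSphere_eq hF]
  exact lintegral_congr fun t => (lintegral_proportions_eq_lintegral_spacings (hFp t)).symm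

end Sibuya

/-! ### The uniform measure on the sphere -/

theorem sum_sq_pos {m : ℕ} {x : Fin m → ℝ} (hx : x ≠ 0) : 0 < ∑ i, x i ^ 2 := by
  obtain ⟨i, hi⟩ := Function.ne_iff.1 hx
  exact Finset.sum_pos' (fun _ _ => sq_nonneg _) ⟨i, Finset.mem_univ i, sq_pos_of_ne_zero hi⟩

theorem sum_sq_toSphere {m : ℕ} {x : Fin m → ℝ} (hx : x ≠ 0) : ∑ i, toSphere x i ^ 2 = 1 := by
  have hpos := sum_sq_pos hx
  simp only [toSphere, Pi.smul_apply, smul_eq_mul, mul_pow]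
  rw [← Finset.mul_sum, inv_pow, Real.sq_sqrt hpos.le, inv_mul_cancel₀ hpos.ne']

theorem nuInf_toSphere {m : ℕ} {x : Fin m → ℝ} (hx : x ≠ 0) : nuInf (toSphere x) = nuInf x :=
  nuInf_smul (inv_pos.2 (Real.sqrt_pos.2 (sum_sq_pos hx))) x

theorem truncCube_ne_zero {n Q : ℕ} {x : Fin (n + 1) → ℝ} (hx : x ≠ 0) : truncCube Q x ≠ 0 := by
  obtain ⟨i, hi⟩ := exists_faceIdxN_eq x
  refine Function.ne_iff.2 ⟨i, ?_⟩
  rw [truncCube, if_pos hi.symm, Pi.zero_apply, ← abs_pos, ((faceIdxN_eq_iff x i).1 hi).1]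
  exact norm_pos_iff.2 hx

theorem sum_sq_truncSphere {m Q : ℕ} {u : Fin (2 * (m + 1)) → ℝ} (hu : ∑ i, u i ^ 2 = 1) :
    ∑ i, truncSphere (m + 1) Q u i ^ 2 = 1 := by
  have hu₀ : u ≠ 0 := by
    rintro rfl
    simp at hu
  rw [truncSphere_eq]
  refine sum_sq_toSphere (truncCube_ne_zero (n := 2 * m + 1) (norm_ne_zero_iff.1 ?_))
  rw [norm_nuInf hu₀]
  exact one_ne_zero

theorem ae_stdGaussianPi_ne_zero {ι : Type*} [Fintype ι] [Nonempty ι] :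
    ∀ᵐ g ∂stdGaussianPi ι, g ≠ 0 := by
  have := nullSingletonClass_gaussianReal (μ := 0) (v := 1) one_ne_zero
  have i : ι := Classical.arbitrary ι
  filter_upwards [Measure.ae_eval_ne (fun _ => gaussianReal 0 1) i 0] with g hg
  exact Function.ne_iff.2 ⟨i, hg⟩

theorem uniformSphere_eq (N : ℕ) :
    uniformSphere N = (stdGaussianPi (Fin (2 * N))).map toSphere := rfl

instance (N : ℕ) : IsProbabilityMeasure (uniformSphere N) := by
  rw [uniformSphere_eq]
  exact Measure.isProbabilityMeasure_map measurable_toSphere.aemeasurable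

theorem lintegral_uniformSphere {N : ℕ} {f : (Fin (2 * N) → ℝ) → ℝ≥0∞} (hf : Measurable f) :
    ∫⁻ u, f u ∂uniformSphere N = ∫⁻ g, f (toSphere g) ∂stdGaussianPi (Fin (2 * N)) :=
  lintegral_map hf measurable_toSphere

theorem measurableSet_sum_sq_eq_one (m : ℕ) :
    MeasurableSet {x : Fin m → ℝ | ∑ i, x i ^ 2 = 1} :=
  measurableSet_eq_fun (by fun_prop) measurable_const

theorem ae_uniformSphere_sum_sq_eq_one (m : ℕ) :
    ∀ᵐ u ∂uniformSphere (m + 1), ∑ i, u i ^ 2 = 1 := by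
  rw [uniformSphere_eq, ae_map_iff measurable_toSphere.aemeasurable
    (measurableSet_sum_sq_eq_one _)]
  have : Nonempty (Fin (2 * (m + 1))) := ⟨⟨0, by omega⟩⟩
  filter_upwards [ae_stdGaussianPi_ne_zero] with g hg using sum_sq_toSphere hg

/-! ### The averaged inequality -/

theorem measurable_truncSphere (m Q : ℕ) : Measurable (truncSphere (m + 1) Q) :=
  measurable_toSphere.comp ((measurable_truncCube (n := 2 * m + 1) Q).comp measurable_nuInf)

theorem measurable_fracSphere (m Q : ℕ) : Measurable (fracSphere (m + 1) Q) := by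
  rw [funext (fracSphere_eq m Q)]
  exact measurable_sibuya.comp ((measurable_digits (n := 2 * m + 1) Q).comp measurable_nuInf)

section Averaged

variable {m Q : ℕ} {T : (Fin (2 * (m + 1)) → ℝ) → (Fin (2 * (m + 1)) → ℝ) → ℝ≥0∞}

theorem lintegral_uniformSphere_eq_lintegral_sibuya {f : (Fin (2 * (m + 1)) → ℝ) → ℝ≥0∞}
    (hf : Measurable f) :
    ∫⁻ v, f v ∂uniformSphere (m + 1) =
      ∫⁻ y, f (sibuya (m + 1) y) ∂cubeMeasure (Fin (2 * (m + 1) - 1)) := by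
  rw [lintegral_uniformSphere hf, lintegral_sibuya hf]

theorem lintegral_truncSphere_fracSphere_eq (hT : Measurable (Function.uncurry T)) :
    ∫⁻ u, T (truncSphere (m + 1) Q u) (fracSphere (m + 1) Q u) ∂uniformSphere (m + 1) =
      ∫⁻ g, T (toSphere (truncCube Q (nuInf g)))
        (sibuya (m + 1) (digits (n := 2 * m + 1) Q (nuInf g)))
        ∂stdGaussianPi (Fin (2 * (m + 1))) := by
  have hTu : Measurable fun u => T (truncSphere (m + 1) Q u) (fracSphere (m + 1) Q u) :=
    hT.comp ((measurable_truncSphere m Q).prodMk (measurable_fracSphere m Q))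
  rw [lintegral_uniformSphere hTu]
  refine lintegral_congr_ae ?_
  filter_upwards [ae_stdGaussianPi_ne_zero] with g hg
  rw [truncSphere_eq, fracSphere_eq, nuInf_toSphere hg]

theorem lintegral_truncSphere_eq (hT : Measurable (Function.uncurry T)) :
    ∫⁻ u, ∫⁻ v, T (truncSphere (m + 1) Q u) v ∂uniformSphere (m + 1) ∂uniformSphere (m + 1) =
      ∫⁻ g, ∫⁻ y, T (toSphere (truncCube Q (nuInf g))) (sibuya (m + 1) y)
        ∂cubeMeasure (Fin (2 * (m + 1) - 1)) ∂stdGaussianPi (Fin (2 * (m + 1))) := by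
  have hTu : Measurable fun u => ∫⁻ v, T (truncSphere (m + 1) Q u) v ∂uniformSphere (m + 1) :=
    hT.lintegral_prod_right'.comp (measurable_truncSphere m Q)
  rw [lintegral_uniformSphere hTu]
  refine lintegral_congr_ae ?_
  filter_upwards [ae_stdGaussianPi_ne_zero] with g hg
  rw [truncSphere_eq, nuInf_toSphere hg]
  exact lintegral_uniformSphere_eq_lintegral_sibuya hT.of_uncurry_left

theorem lintegral_truncSphere_fracSphere_le (hQ : 0 < Q) (hT : Measurable (Function.uncurry T)) :
    ∫⁻ u, T (truncSphere (m + 1) Q u) (fracSphere (m + 1) Q u) ∂uniformSphere (m + 1) ≤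
      ENNReal.ofReal (Real.exp (2 * ((m + 1 : ℕ) : ℝ) ^ (3 / 2 : ℝ) / Q)) *
        ∫⁻ u, ∫⁻ v, T (truncSphere (m + 1) Q u) v
          ∂uniformSphere (m + 1) ∂uniformSphere (m + 1) := by
  rw [lintegral_truncSphere_fracSphere_eq hT, lintegral_truncSphere_eq hT]
  exact lintegral_truncCube_digits_le (n := 2 * m + 1)
    (F := fun a y => T (toSphere a) (sibuya (m + 1) y)) hQ
    (hT.comp ((measurable_toSphere.comp measurable_fst).prodMk
      (measurable_sibuya.comp measurable_snd)))
    fun w w' h => coneDensity_le_exp_mul (N := m + 1) hQ (by omega) h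

end Averaged

-- The value `∞` off `s` gives measurability and an upper bound for `f` at the same time.
theorem exists_measurable_ge_eqOn {α : Type*} [MeasurableSpace α] {s : Set α}
    (hs : MeasurableSet s) {f : α → ℝ≥0∞} (hf : Measurable (s.domRestrict f)) :
    ∃ g, Measurable g ∧ (∀ x, f x ≤ g x) ∧ Set.EqOn g f s := by
  classical
  refine ⟨s.piecewise f fun _ => ∞, measurable_of_restrict_of_restrict_compl hs ?_ ?_,
    fun x => ?_, s.piecewise_eqOn _ _⟩
  · rwa [Set.domRestrict_piecewise]
  · rw [Set.domRestrict_piecewise_compl]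
    exact measurable_const
  · by_cases hx : x ∈ s <;> simp [hx]

theorem truncation_fractional_sphere_general (N Q : ℕ) (hN : 1 ≤ N) (hQ : 1 ≤ Q)
    (Θ : (Fin (2 * N) → ℝ) → (Fin (2 * N) → ℝ) → ℝ≥0∞)
    (hΘ : Measurable (({x | ∑ i, x i ^ 2 = 1} ×ˢ {x | ∑ i, x i ^ 2 = 1}).domRestrict
      (Function.uncurry Θ))) :
    (∀ u : Fin (2 * N) → ℝ, ∑ i, u i ^ 2 = 1 →
        dSph (truncSphere N Q u) u ≤ 3 * Real.sqrt N / Q) ∧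
      ∫⁻ u, Θ (truncSphere N Q u) (fracSphere N Q u) ∂uniformSphere N
        ≤ ENNReal.ofReal (Real.exp (2 * (N : ℝ) ^ (3 / 2 : ℝ) / Q)) *
          ∫⁻ u, ∫⁻ v, Θ (truncSphere N Q u) v ∂uniformSphere N ∂uniformSphere N := by
  refine ⟨fun u hu => dSph_truncSphere_le hN hQ hu, ?_⟩
  obtain ⟨m, rfl⟩ := Nat.exists_eq_add_of_le' hN
  have hS := measurableSet_sum_sq_eq_one (2 * (m + 1))
  obtain ⟨T, hT, hΘT, hTΘ⟩ := exists_measurable_ge_eqOn (hS.prod hS) hΘ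
  have hae := ae_uniformSphere_sum_sq_eq_one m
  calc ∫⁻ u, Θ (truncSphere (m + 1) Q u) (fracSphere (m + 1) Q u) ∂uniformSphere (m + 1)
      ≤ ∫⁻ u, T (truncSphere (m + 1) Q u, fracSphere (m + 1) Q u) ∂uniformSphere (m + 1) :=
        lintegral_mono fun u => hΘT _
    _ ≤ _ * ∫⁻ u, ∫⁻ v, T (truncSphere (m + 1) Q u, v)
          ∂uniformSphere (m + 1) ∂uniformSphere (m + 1) :=
        lintegral_truncSphere_fracSphere_le (T := Function.curry T) hQ hT
    _ = _ := by
        congr 1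
        refine lintegral_congr_ae (hae.mono fun u hu => lintegral_congr_ae ?_)
        filter_upwards [hae] with v hv using hTΘ ⟨sum_sq_truncSphere hu, hv⟩

/-- Duplication of the uniform distribution on the sphere: `⌊u⌋_Q` is within geodesic
distance `3√N/Q` of `u`, and `{u}_Q` is nearly uniform and nearly independent of `⌊u⌋_Q`. -/
theorem truncation_fractional_sphere (N Q : ℕ) (hN : 1 ≤ N) (hQ : 1 ≤ Q)
    (Θ : (Fin (2 * N) → ℝ) → (Fin (2 * N) → ℝ) → ℝ)
    (hΘcont : ContinuousOn (fun p : (Fin (2 * N) → ℝ) × (Fin (2 * N) → ℝ) => Θ p.1 p.2)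
      ({x | ∑ i, x i ^ 2 = 1} ×ˢ {x | ∑ i, x i ^ 2 = 1}))
    (hΘnonneg : ∀ x ∈ {x : Fin (2 * N) → ℝ | ∑ i, x i ^ 2 = 1},
      ∀ y ∈ {x : Fin (2 * N) → ℝ | ∑ i, x i ^ 2 = 1}, 0 ≤ Θ x y) :
    (∀ u : Fin (2 * N) → ℝ, ∑ i, u i ^ 2 = 1 →
        dSph (truncSphere N Q u) u ≤ 3 * Real.sqrt N / Q) ∧
      ∫⁻ u, ENNReal.ofReal (Θ (truncSphere N Q u) (fracSphere N Q u)) ∂uniformSphere N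
        ≤ ENNReal.ofReal (Real.exp (2 * (N : ℝ) ^ (3 / 2 : ℝ) / Q)) *
          ∫⁻ u, ∫⁻ v, ENNReal.ofReal (Θ (truncSphere N Q u) v)
            ∂uniformSphere N ∂uniformSphere N :=
  truncation_fractional_sphere_general N Q hN hQ (fun a b => ENNReal.ofReal (Θ a b))
    (ENNReal.measurable_ofReal.comp hΘcont.domRestrict.measurable)
end
end

section
/- Let f, f', g ∈ S(ℋ) with d_S(f,g) ≤ π/2, g ≠ −f and g ≠ −f'. Then for every t ∈ [0,1], d_S(Γ(g,f,t), Γ(g,f',t)) ≤ 2 d_S(f,f'). -/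
/-!
Put `α = d_S(f,g)`, `β = d_S(f',g)`, `γ = d_S(f,f')`. The geodesics are
`cos (tα) g + sin (tα) u` and `cos (tβ) g + sin (tβ) v` with `u, v ⊥ g`, so with `k = Re ⟪u, v⟫` the
cosine of the distance at time `t` is
`X t = cos (tα) cos (tβ) + k sin (tα) sin (tβ)`, and `X 1 = cos γ`. It satisfies
`2 X 1 - 1 ≤ X t`: both sides are affine in `k ∈ [-1, 1]`, and at the endpoints `k = ±1` this is
`2 cos s - 1 ≤ cos (ts)` with `s = α ∓ β`. As `α + β ≤ π/2 + π`, both values have `|s| ≤ 3π/2`; if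
`|s| ≤ π`, then `cos (ts) ≥ cos s`, and otherwise `cos s ≤ 0`, so the left side is at most `-1`.
Finally `cos 2γ ≤ 2 cos γ - 1` for `γ ≤ π/2`.
-/

open scoped RealInnerProductSpace

noncomputable section

variable {E : Type*} [NormedAddCommGroup E] [InnerProductSpace ℂ E]

/-- Geodesic (angular) distance on the unit sphere of a complex Hermitian space:
`cos (dS x y) = Re ⟪x, y⟫`. -/
def sphDist (x y : E) : ℝ := Real.arccos (inner (𝕜 := ℂ) x y).re

/-- The geodesic path `Γ(g,f,t)` from `g` to `f` on the unit sphere, where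
`α = d_S(f,g)`; it is constantly `g` when `α = 0`. -/
def sphGeodesic (g f : E) (t : ℝ) : E :=
  if sphDist f g = 0 then g
  else (Real.sin ((1 - t) * sphDist f g) / Real.sin (sphDist f g)) • g
    + (Real.sin (t * sphDist f g) / Real.sin (sphDist f g)) • f

section CosineInequalities

open Real

lemma two_mul_cos_sub_one_le_cos_mul {s t : ℝ} (hs : |s| ≤ 3 * π / 2) (ht : t ∈ Set.Icc (0 : ℝ) 1) :
    2 * cos s - 1 ≤ cos (t * s) := by
  rcases le_total |s| π with hsπ | hsπ
  · have hts : |t * s| ≤ |s| := by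
      rw [abs_mul, abs_of_nonneg ht.1]
      exact mul_le_of_le_one_left (abs_nonneg s) ht.2
    have hcos : cos |s| ≤ cos |t * s| := cos_le_cos_of_nonneg_of_le_pi (abs_nonneg _) hsπ hts
    rw [cos_abs, cos_abs] at hcos
    linarith [cos_le_one s]
  · have hcos : cos |s| ≤ 0 :=
      cos_nonpos_of_pi_div_two_le_of_le (by linarith [pi_pos]) (by linarith)
    rw [cos_abs] at hcos
    linarith [neg_one_le_cos (t * s)]

lemma cos_mul_cos_add_sin_mul_sin_mul (a b k : ℝ) :
    cos a * cos b + sin a * sin b * k =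
      (1 + k) / 2 * cos (a - b) + (1 - k) / 2 * cos (a + b) := by
  rw [cos_sub, cos_add]
  ring

lemma two_mul_cos_sub_one_le_of_spherical_triangle {α β k t : ℝ} (hα : 0 ≤ α) (hβ : 0 ≤ β)
    (hαβ : α + β ≤ 3 * π / 2) (hk : |k| ≤ 1) (ht : t ∈ Set.Icc (0 : ℝ) 1) :
    2 * (cos α * cos β + sin α * sin β * k) - 1 ≤
      cos (t * α) * cos (t * β) + sin (t * α) * sin (t * β) * k := by
  obtain ⟨hk_lower, hk_upper⟩ := abs_le.1 hk
  have hsub : 2 * cos (α - β) - 1 ≤ cos (t * (α - β)) :=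
    two_mul_cos_sub_one_le_cos_mul (abs_le.2 ⟨by linarith, by linarith⟩) ht
  have hadd : 2 * cos (α + β) - 1 ≤ cos (t * (α + β)) :=
    two_mul_cos_sub_one_le_cos_mul (abs_le.2 ⟨by linarith, hαβ⟩) ht
  rw [cos_mul_cos_add_sin_mul_sin_mul, cos_mul_cos_add_sin_mul_sin_mul, ← mul_sub, ← mul_add]
  calc 2 * ((1 + k) / 2 * cos (α - β) + (1 - k) / 2 * cos (α + β)) - 1
    _ = (1 + k) / 2 * (2 * cos (α - β) - 1) + (1 - k) / 2 * (2 * cos (α + β) - 1) := by ring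
    _ ≤ (1 + k) / 2 * cos (t * (α - β)) + (1 - k) / 2 * cos (t * (α + β)) := by
      gcongr
      all_goals linarith

lemma le_two_mul_of_two_mul_cos_sub_one_le_cos {γ θ : ℝ} (hγ : 0 ≤ γ) (hθ : θ ≤ π)
    (h : 2 * cos γ - 1 ≤ cos θ) : θ ≤ 2 * γ := by
  by_contra! hlt
  have hcos_lt : cos θ < cos (2 * γ) := cos_lt_cos_of_nonneg_of_le_pi (by linarith) hθ hlt
  have hcos_nonneg : 0 ≤ cos γ := cos_nonneg_of_neg_pi_div_two_le_of_le (by linarith) (by linarith)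
  have hcos_sq : cos γ ^ 2 ≤ cos γ := pow_le_of_le_one hcos_nonneg (cos_le_one γ) two_ne_zero
  rw [cos_two_mul] at hcos_lt
  linarith

end CosineInequalities

section Slerp

open Real InnerProductGeometry NormedSpace

variable {F : Type*} [NormedAddCommGroup F] [InnerProductSpace ℝ F] {f f' g : F}

/-- The geodesic from `g` to `f` on the unit sphere of a real inner product space, by spherical
linear interpolation; it is constantly `g` when the angle vanishes. -/
def slerp (g f : F) (t : ℝ) : F :=
  if angle f g = 0 then g
  else (sin ((1 - t) * angle f g) / sin (angle f g)) • g
    + (sin (t * angle f g) / sin (angle f g)) • f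

/-- The initial direction of the geodesic from `g` to `f` on the unit sphere: a unit vector
orthogonal to `g`, except that it is `0` when `f = g` or `f = -g`. -/
def slerpDirection (g f : F) : F := normalize (f - cos (angle f g) • g)

lemma norm_sub_cos_angle_smul (hf : ‖f‖ = 1) (hg : ‖g‖ = 1) :
    ‖f - cos (angle f g) • g‖ = sin (angle f g) := by
  refine (pow_left_inj₀ (norm_nonneg _) (sin_angle_nonneg f g) two_ne_zero).1 ?_
  rw [norm_sub_sq_real, real_inner_smul_right, inner_eq_cos_angle_of_norm_eq_one hf hg, norm_smul,
    hf, hg, mul_one, norm_eq_abs, sq_abs, sin_sq]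
  ring

lemma sin_angle_smul_slerpDirection (hf : ‖f‖ = 1) (hg : ‖g‖ = 1) :
    sin (angle f g) • slerpDirection g f = f - cos (angle f g) • g := by
  rw [← norm_sub_cos_angle_smul hf hg, slerpDirection, norm_smul_normalize]

lemma inner_slerpDirection (hf : ‖f‖ = 1) (hg : ‖g‖ = 1) : ⟪g, slerpDirection g f⟫ = 0 := by
  rw [slerpDirection, NormedSpace.normalize, real_inner_smul_right, inner_sub_right,
    real_inner_smul_right, real_inner_comm, inner_eq_cos_angle_of_norm_eq_one hf hg,
    inner_self_eq_one_of_norm_eq_one hg]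
  ring

lemma norm_slerpDirection (hf : ‖f‖ = 1) (hg : ‖g‖ = 1) (h : sin (angle f g) ≠ 0) :
    ‖slerpDirection g f‖ = 1 :=
  norm_normalize (norm_ne_zero_iff.1 (by rwa [norm_sub_cos_angle_smul hf hg]))

lemma norm_slerpDirection_le_one (g f : F) : ‖slerpDirection g f‖ ≤ 1 := by
  rw [slerpDirection, NormedSpace.normalize, norm_smul, norm_inv, norm_norm]
  exact inv_mul_le_one

lemma sin_angle_ne_zero (hf : ‖f‖ = 1) (hg : ‖g‖ = 1) (h0 : angle f g ≠ 0) (h : f ≠ -g) :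
    sin (angle f g) ≠ 0 := by
  have hpi : angle f g ≠ π := by
    rwa [ne_eq, ← cos_eq_neg_one_iff_angle_eq_pi, ← inner_eq_cos_angle_of_norm_eq_one hf hg,
      inner_eq_neg_one_iff_of_norm_eq_one hf hg]
  simp [sin_eq_zero_iff_angle_eq_zero_or_angle_eq_pi, h0, hpi]

lemma slerp_eq_cos_smul_add_sin_smul (hf : ‖f‖ = 1) (hg : ‖g‖ = 1) (h : f ≠ -g) (t : ℝ) :
    slerp g f t = cos (t * angle f g) • g + sin (t * angle f g) • slerpDirection g f := by
  by_cases h0 : angle f g = 0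
  · simp [slerp, h0]
  have hsin := sin_angle_ne_zero hf hg h0 h
  have hdir : slerpDirection g f = (sin (angle f g))⁻¹ • (f - cos (angle f g) • g) :=
    (eq_inv_smul_iff₀ hsin).2 (sin_angle_smul_slerpDirection hf hg)
  rw [slerp, if_neg h0, hdir, sub_mul, one_mul, sin_sub]
  match_scalars <;> field_simp
  ring

lemma slerp_one (hf : ‖f‖ = 1) (hg : ‖g‖ = 1) (h : f ≠ -g) : slerp g f 1 = f := by
  rw [slerp_eq_cos_smul_add_sin_smul hf hg h, one_mul, sin_angle_smul_slerpDirection hf hg,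
    add_sub_cancel]

lemma inner_slerp_slerp (hf : ‖f‖ = 1) (hf' : ‖f'‖ = 1) (hg : ‖g‖ = 1) (h : f ≠ -g) (h' : f' ≠ -g)
    (t : ℝ) :
    ⟪slerp g f t, slerp g f' t⟫ = cos (t * angle f g) * cos (t * angle f' g) +
      sin (t * angle f g) * sin (t * angle f' g) * ⟪slerpDirection g f, slerpDirection g f'⟫ := by
  rw [slerp_eq_cos_smul_add_sin_smul hf hg h, slerp_eq_cos_smul_add_sin_smul hf' hg h']
  simp only [inner_add_left, inner_add_right, real_inner_smul_left, real_inner_smul_right,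
    inner_self_eq_one_of_norm_eq_one hg, inner_slerpDirection hf' hg,
    real_inner_comm g (slerpDirection g f), inner_slerpDirection hf hg]
  ring

lemma norm_slerp (hf : ‖f‖ = 1) (hg : ‖g‖ = 1) (h : f ≠ -g) (t : ℝ) : ‖slerp g f t‖ = 1 := by
  by_cases h0 : angle f g = 0
  · rw [slerp, if_pos h0, hg]
  have hsin := sin_angle_ne_zero hf hg h0 h
  refine (pow_eq_one_iff_of_nonneg (norm_nonneg _) two_ne_zero).1 ?_
  rw [← real_inner_self_eq_norm_sq, inner_slerp_slerp hf hf hg h h,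
    inner_self_eq_one_of_norm_eq_one (norm_slerpDirection hf hg hsin), mul_one, ← sq, ← sq,
    cos_sq_add_sin_sq]

lemma two_mul_inner_sub_one_le_inner_slerp (hf : ‖f‖ = 1) (hf' : ‖f'‖ = 1) (hg : ‖g‖ = 1)
    (hangle : angle f g + angle f' g ≤ 3 * π / 2) (h : f ≠ -g) (h' : f' ≠ -g)
    {t : ℝ} (ht : t ∈ Set.Icc (0 : ℝ) 1) :
    2 * ⟪f, f'⟫ - 1 ≤ ⟪slerp g f t, slerp g f' t⟫ := by
  have hdir : |⟪slerpDirection g f, slerpDirection g f'⟫| ≤ 1 :=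
    (abs_real_inner_le_norm _ _).trans <| mul_le_one₀ (norm_slerpDirection_le_one g f)
      (norm_nonneg _) (norm_slerpDirection_le_one g f')
  have hinner := inner_slerp_slerp hf hf' hg h h' 1
  rw [slerp_one hf hg h, slerp_one hf' hg h', one_mul, one_mul] at hinner
  rw [hinner, inner_slerp_slerp hf hf' hg h h']
  exact two_mul_cos_sub_one_le_of_spherical_triangle (angle_nonneg f g) (angle_nonneg f' g) hangle
    hdir ht

theorem sphDist_geodesic_le_general (hf : ‖f‖ = 1) (hf' : ‖f'‖ = 1) (hg : ‖g‖ = 1)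
    (hangle : angle f g + angle f' g ≤ 3 * π / 2) (h : f ≠ -g) (h' : f' ≠ -g)
    {t : ℝ} (ht : t ∈ Set.Icc (0 : ℝ) 1) :
    angle (slerp g f t) (slerp g f' t) ≤ 2 * angle f f' := by
  apply le_two_mul_of_two_mul_cos_sub_one_le_cos (angle_nonneg _ _) (angle_le_pi _ _)
  rw [← inner_eq_cos_angle_of_norm_eq_one hf hf',
    ← inner_eq_cos_angle_of_norm_eq_one (norm_slerp hf hg h t) (norm_slerp hf' hg h' t)]
  exact two_mul_inner_sub_one_le_inner_slerp hf hf' hg hangle h h' ht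

end Slerp

attribute [local instance] InnerProductSpace.complexToReal

lemma sphDist_eq_angle {x y : E} (hx : ‖x‖ = 1) (hy : ‖y‖ = 1) :
    sphDist x y = InnerProductGeometry.angle x y := by
  rw [InnerProductGeometry.angle, hx, hy, mul_one, div_one]
  rfl

lemma sphGeodesic_eq_slerp {f g : E} (hf : ‖f‖ = 1) (hg : ‖g‖ = 1) (t : ℝ) :
    sphGeodesic g f t = slerp g f t := by
  rw [sphGeodesic, slerp, sphDist_eq_angle hf hg]

/-- If `f, f', g` are unit vectors with `d_S(f,g) ≤ π/2`, `g ≠ −f`, `g ≠ −f'`, then for all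
`t ∈ [0,1]`, `d_S(Γ(g,f,t), Γ(g,f',t)) ≤ 2 d_S(f,f')`. -/
theorem sphDist_geodesic_le (f f' g : E) (hf : ‖f‖ = 1) (hf' : ‖f'‖ = 1) (hg : ‖g‖ = 1)
    (hfg : sphDist f g ≤ Real.pi / 2) (h1 : g ≠ -f) (h2 : g ≠ -f')
    (t : ℝ) (ht : t ∈ Set.Icc (0 : ℝ) 1) :
    sphDist (sphGeodesic g f t) (sphGeodesic g f' t) ≤ 2 * sphDist f f' := by
  have hne : f ≠ -g := fun h => h1 (by rw [h, neg_neg])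
  have hne' : f' ≠ -g := fun h => h2 (by rw [h, neg_neg])
  rw [sphGeodesic_eq_slerp hf hg, sphGeodesic_eq_slerp hf' hg, sphDist_eq_angle hf hf',
    sphDist_eq_angle (norm_slerp hf hg hne t) (norm_slerp hf' hg hne' t)]
  rw [sphDist_eq_angle hf hg] at hfg
  have hangle' := InnerProductGeometry.angle_le_pi f' g
  exact sphDist_geodesic_le_general hf hf' hg (by linarith) hne hne' ht
end
end
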